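/- arXiv:2008.13393 — 3 statements merged into one kernel-verified Lean document; each statement's English description precedes it below -/
import Mathlib

section
/- Let X be a separable complex Banach space, T a bounded linear operator on X, and Λ ⊆ (0,+∞) a set with at least two elements. Assume there exist a dense subset X₀ ⊆ X and a mapping S : X₀ → X₀ such that T(S(x)) = x for all x ∈ X₀, and suppose a_T(X₀,S) = 1/r(T) and b_T(X₀,S) = +∞. Then ⋂_{λ∈Λ} FHC(λT) ≠ ∅ if and only if Λ is countable and relatively compact in (1/r(T), +∞). -/
open Filter Topology
open scoped ENNReal NNReal

/-- Lower density of a set of natural numbers. -/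
noncomputable def lowerDensity (E : Set ℕ) : ℝ :=
  Filter.liminf (fun n : ℕ =>
    (∑ k ∈ Finset.range (n + 1), Set.indicator E (fun _ => (1 : ℝ)) k) / ((n : ℝ) + 1))
    Filter.atTop

/-- The set of frequently hypercyclic vectors of an operator. -/
noncomputable def FHC {X : Type*} [NormedAddCommGroup X] [NormedSpace ℂ X]
    (T : X →L[ℂ] X) : Set X :=
  {x | ∀ U : Set X, IsOpen U → U.Nonempty → 0 < lowerDensity {n : ℕ | (T ^ n) x ∈ U}}

/-- `a_T(X₀,S) = sup_{x ∈ X₀} limsup_n ‖Sⁿx‖^{1/n}`, computed in `ℝ≥0∞`. -/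
noncomputable def aT {X : Type*} [NormedAddCommGroup X] (X₀ : Set X) (S : X₀ → X₀) : ℝ≥0∞ :=
  ⨆ x : X₀, Filter.limsup
    (fun n : ℕ => (‖((S^[n] x : X₀) : X)‖₊ : ℝ≥0∞) ^ (1 / (n : ℝ))) Filter.atTop

/-- `b_T(X₀,S) = inf_{x ∈ X₀} (limsup_n ‖Tⁿx‖^{1/n})⁻¹`, computed in `ℝ≥0∞`. -/
noncomputable def bT {X : Type*} [NormedAddCommGroup X] [NormedSpace ℂ X]
    (T : X →L[ℂ] X) (X₀ : Set X) : ℝ≥0∞ :=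
  ⨅ x : X₀, (Filter.limsup
    (fun n : ℕ => (‖(T ^ n) (x : X)‖₊ : ℝ≥0∞) ^ (1 / (n : ℝ))) Filter.atTop)⁻¹


lemma posLD_iff (E : Set ℕ) : 0 < lowerDensity E ↔ ∃ c : ℝ, 0 < c ∧ ∀ᶠ n : ℕ in atTop,
    c * ((n : ℝ) + 1) ≤ ∑ k ∈ Finset.range (n + 1), Set.indicator E (fun _ => (1 : ℝ)) k := by
  have h0 : ∀ n : ℕ, 0 ≤ (∑ k ∈ Finset.range (n + 1), Set.indicator E (fun _ => (1 : ℝ)) k) / ((n : ℝ) + 1) := by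
    intro n
    apply div_nonneg _ (by positivity)
    exact Finset.sum_nonneg fun k _ => Set.indicator_nonneg (fun _ _ => zero_le_one) k
  have h1 : ∀ n : ℕ, (∑ k ∈ Finset.range (n + 1), Set.indicator E (fun _ => (1 : ℝ)) k) / ((n : ℝ) + 1) ≤ 1 := by
    intro n
    rw [div_le_one (by positivity)]
    calc _ ≤ ∑ k ∈ Finset.range (n + 1), (1 : ℝ) :=
          Finset.sum_le_sum fun k _ => Set.indicator_le_self' (fun _ _ => zero_le_one) k
      _ = _ := by simp
  unfold lowerDensity
  constructor
  · intro h
    obtain ⟨c, hc0, hc⟩ := exists_between h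
    refine ⟨c, hc0, ?_⟩
    have := Filter.eventually_lt_of_lt_liminf hc (Filter.isBoundedUnder_of ⟨0, h0⟩)
    filter_upwards [this] with n hn
    rw [lt_div_iff₀ (by positivity)] at hn
    exact hn.le
  · rintro ⟨c, hc, h⟩
    refine lt_of_lt_of_le hc (Filter.le_liminf_of_le ?_ ?_)
    · exact (Filter.isBoundedUnder_of ⟨1, h1⟩).isCoboundedUnder_ge
    · filter_upwards [h] with n hn
      rw [le_div_iff₀ (by positivity)]
      exact hn

lemma growth (f : ℕ → ℝ≥0) (R : ℝ) (hR : 0 < R)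
    (h : limsup (fun n : ℕ => (f n : ℝ≥0∞) ^ (1 / (n : ℝ))) atTop < ENNReal.ofReal R) :
    ∃ C : ℝ, 1 ≤ C ∧ ∀ n, (f n : ℝ) ≤ C * R ^ n := by
  have h1 := Filter.eventually_lt_of_limsup_lt h
  obtain ⟨N, hN⟩ := Filter.eventually_atTop.1 h1
  have h2 : ∀ n, N + 1 ≤ n → (f n : ℝ) ≤ R ^ n := by
    intro n hn
    have h3 := (hN n (by omega)).le
    have hn0 : (0 : ℝ) < n := by exact_mod_cast (by omega : 0 < n)
    have h4 := ENNReal.rpow_le_rpow h3 hn0.le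
    rw [← ENNReal.rpow_mul, one_div, inv_mul_cancel₀ hn0.ne', ENNReal.rpow_one,
      ENNReal.rpow_natCast, ← ENNReal.ofReal_pow hR.le] at h4
    have h5 := ENNReal.toReal_mono ENNReal.ofReal_ne_top h4
    rwa [ENNReal.toReal_ofReal (by positivity), ENNReal.coe_toReal] at h5
  refine ⟨1 + ∑ k ∈ Finset.range (N + 1), (f k : ℝ) / R ^ k, ?_, ?_⟩
  · have : 0 ≤ ∑ k ∈ Finset.range (N + 1), (f k : ℝ) / R ^ k :=
      Finset.sum_nonneg fun k _ => by positivity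
    linarith
  · intro n
    have h0 : 0 ≤ ∑ k ∈ Finset.range (N + 1), (f k : ℝ) / R ^ k :=
      Finset.sum_nonneg fun k _ => by positivity
    have hp : 0 < R ^ n := by positivity
    by_cases hn : N + 1 ≤ n
    · nlinarith [h2 n hn]
    · have : (f n : ℝ) / R ^ n ≤ ∑ k ∈ Finset.range (N + 1), (f k : ℝ) / R ^ k :=
        Finset.single_le_sum (f := fun k => (f k : ℝ) / R ^ k) (fun k _ => by positivity)
          (Finset.mem_range.2 (by omega))
      rw [div_le_iff₀ hp] at this
      nlinarith

lemma comb (K : ℕ) (hK : 2 ≤ K) (M : ℕ → ℕ) : ∃ (E : Set ℕ) (P : ℕ → ℕ),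
    (∀ n ∈ E, M (P n) ≤ n) ∧
    (∀ n ∈ E, ∀ m ∈ E, n < m → (P n = P m ∧ n + M (P n) ≤ m) ∨ K * n ≤ m) ∧
    ∀ p, 0 < lowerDensity {n | n ∈ E ∧ P n = p} := by
  set P : ℕ → ℕ := fun n => padicValNat 2 (Nat.log K n / 2 + 1) with hP
  have hpow : ∀ e, e ≤ K ^ e := fun e => (Nat.lt_pow_self (by omega)).le
  refine ⟨{n | n ≠ 0 ∧ Even (Nat.log K n) ∧ K ^ (M (P n)) ∣ n}, P, ?_, ?_, ?_⟩
  · rintro n ⟨hn, -, hd⟩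
    exact (hpow _).trans (Nat.le_of_dvd (by omega) hd)
  · rintro n ⟨hn, hne, hnd⟩ m ⟨hm, hme, hmd⟩ hlt
    have hmono : Nat.log K n ≤ Nat.log K m := Nat.log_mono_right hlt.le
    by_cases h : Nat.log K n = Nat.log K m
    · left
      have hPP : P n = P m := by simp only [hP, h]
      refine ⟨hPP, ?_⟩
      rw [← hPP] at hmd
      have := Nat.le_of_dvd (by omega) (Nat.dvd_sub hmd hnd)
      have := hpow (M (P n))
      omega
    · right
      have h2 : Nat.log K n + 2 ≤ Nat.log K m := by
        obtain ⟨a, ha⟩ := hne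
        obtain ⟨b, hb⟩ := hme
        omega
      have h3 : n < K ^ (Nat.log K n + 1) := Nat.lt_pow_succ_log_self (by omega) n
      have h4 : K ^ Nat.log K m ≤ m := Nat.pow_log_le_self K hm
      calc K * n ≤ K * K ^ (Nat.log K n + 1) := Nat.mul_le_mul_left _ h3.le
        _ = K ^ (Nat.log K n + 2) := by ring
        _ ≤ K ^ Nat.log K m := Nat.pow_le_pow_right (by omega) h2
        _ ≤ m := h4
  · intro p
    rw [posLD_iff]
    set e := M p with he
    set A := 2 ^ (p + 1) with hA
    have hApos : 0 < A := by positivity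
    have hK0 : (0 : ℝ) < K := by exact_mod_cast (by omega : 0 < K)
    refine ⟨((K : ℝ) ^ (e + 1 + 2 * A))⁻¹, by positivity, ?_⟩
    filter_upwards [eventually_ge_atTop (K ^ (e + 2 * A + 1))] with N hN
    set l := Nat.log K (N + 1) with hl
    have hl1 : e + 2 * A + 1 ≤ l := by
      apply Nat.le_log_of_pow_le (by omega); omega
    obtain ⟨j, hj1, hj2⟩ : ∃ j, 2 * A * j + A ≤ l + 1 ∧ l + 1 < 2 * A * j + 3 * A := by
      refine ⟨(l + 1 - A) / (2 * A), ?_, ?_⟩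
      · have := Nat.mul_div_le (l + 1 - A) (2 * A)
        omega
      · have := Nat.lt_mul_div_succ (l + 1 - A) (b := 2 * A) (by omega)
        rw [mul_add] at this
        omega
    obtain ⟨k, hk⟩ : ∃ k, k + 1 = 2 ^ p * (2 * j + 1) :=
      ⟨2 ^ p * (2 * j + 1) - 1, Nat.sub_add_cancel (Nat.mul_pos (by positivity) (by omega))⟩
    have hkA : 2 * k + 2 = 2 * A * j + A := by
      have : 2 * (k + 1) = 2 * A * j + A := by rw [hk, hA]; ring
      omega
    have hval : padicValNat 2 (k + 1) = p := by
      rw [hk, padicValNat.mul (by positivity) (by omega), padicValNat.prime_pow,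
        padicValNat.eq_zero_of_not_dvd (by omega), add_zero]
    have he2k : e ≤ 2 * k := by omega
    have hsplit : K ^ (2 * k) = K ^ e * K ^ (2 * k - e) := by
      rw [← pow_add]; congr 1; omega
    have hKe : 0 < K ^ e := Nat.pow_pos (by omega)
    have hlt : ∀ i < K ^ (2 * k - e), K ^ (2 * k) + i * K ^ e < K ^ (2 * k + 1) := by
      intro i hi
      have : i * K ^ e < K ^ (2 * k) := by
        rw [hsplit, mul_comm]
        exact Nat.mul_lt_mul_of_pos_left hi hKe
      calc K ^ (2 * k) + i * K ^ e < K ^ (2 * k) * 2 := by omega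
        _ ≤ K ^ (2 * k) * K := Nat.mul_le_mul_left _ hK
        _ = _ := by ring
    have hNle : K ^ (2 * k + 1) ≤ N + 1 := by
      calc K ^ (2 * k + 1) ≤ K ^ l := Nat.pow_le_pow_right (by omega) (by omega)
        _ ≤ N + 1 := Nat.pow_log_le_self K (by omega)
    have hNlt : N + 1 < K ^ (2 * k - e + (e + 1 + 2 * A)) := by
      calc N + 1 < K ^ (l + 1) := Nat.lt_pow_succ_log_self (by omega) _
        _ ≤ _ := Nat.pow_le_pow_right (by omega) (by omega)
    set F : Finset ℕ := (Finset.range (K ^ (2 * k - e))).image (fun i => K ^ (2 * k) + i * K ^ e) with hF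
    have hcard : F.card = K ^ (2 * k - e) := by
      rw [hF, Finset.card_image_of_injective, Finset.card_range]
      intro a b hab
      simp only [add_right_inj] at hab
      exact Nat.eq_of_mul_eq_mul_right hKe hab
    have hmem : ∀ n ∈ F, n ∈ {n | n ∈ {n | n ≠ 0 ∧ Even (Nat.log K n) ∧ K ^ (M (P n)) ∣ n} ∧ P n = p} := by
      intro n hn
      obtain ⟨i, hi, rfl⟩ := Finset.mem_image.1 hn
      have hlog : Nat.log K (K ^ (2 * k) + i * K ^ e) = 2 * k := by
        apply Nat.log_eq_of_pow_le_of_lt_pow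
        · omega
        · exact hlt i (Finset.mem_range.1 hi)
      have hPn : P (K ^ (2 * k) + i * K ^ e) = p := by
        simp only [hP, hlog]
        rw [Nat.mul_div_cancel_left _ (by omega), hval]
      have : 0 < K ^ (2 * k) := Nat.pow_pos (by omega)
      refine ⟨⟨by omega, ?_, ?_⟩, hPn⟩
      · rw [hlog]; exact even_two_mul k
      · rw [hPn, hsplit]
        exact Dvd.dvd.add (Dvd.intro _ rfl) (Dvd.intro_left _ rfl)
    have hsub : F ⊆ Finset.range (N + 1) := by
      intro n hn
      obtain ⟨i, hi, rfl⟩ := Finset.mem_image.1 hn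
      exact Finset.mem_range.2 ((hlt i (Finset.mem_range.1 hi)).trans_le hNle)
    calc ((K : ℝ) ^ (e + 1 + 2 * A))⁻¹ * ((N : ℝ) + 1)
        ≤ ((K : ℝ) ^ (e + 1 + 2 * A))⁻¹ * ((K : ℝ) ^ (2 * k - e + (e + 1 + 2 * A))) := by
          gcongr
          exact_mod_cast hNlt.le
      _ = (K : ℝ) ^ (2 * k - e) := by
          rw [pow_add _ (2 * k - e), mul_comm, mul_assoc, mul_inv_cancel₀ (by positivity), mul_one]
      _ = ∑ n ∈ F, (1 : ℝ) := by
          rw [Finset.sum_const, hcard]; simp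
      _ = ∑ n ∈ F, Set.indicator {n | n ∈ {n | n ≠ 0 ∧ Even (Nat.log K n) ∧ K ^ (M (P n)) ∣ n} ∧ P n = p} (fun _ => (1 : ℝ)) n := by
          refine Finset.sum_congr rfl fun n hn => ?_
          rw [Set.indicator_of_mem (hmem n hn)]
      _ ≤ _ := Finset.sum_le_sum_of_subset_of_nonneg hsub
          fun n _ _ => Set.indicator_nonneg (fun _ _ => zero_le_one) n

lemma posLD_mono {E F : Set ℕ} (h : E ⊆ F) (hE : 0 < lowerDensity E) : 0 < lowerDensity F := by
  rw [posLD_iff] at *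
  obtain ⟨c, hc, h1⟩ := hE
  refine ⟨c, hc, ?_⟩
  filter_upwards [h1] with n hn
  exact hn.trans (Finset.sum_le_sum fun k _ =>
    Set.indicator_le_indicator_of_subset h (fun _ => zero_le_one) k)

lemma count_le (E : Set ℕ) (n a : ℕ) (h : ∀ k ∈ E, k ≤ n → k < a) :
    ∑ k ∈ Finset.range (n + 1), Set.indicator E (fun _ => (1 : ℝ)) k ≤ a := by
  classical
  calc ∑ k ∈ Finset.range (n + 1), Set.indicator E (fun _ => (1 : ℝ)) k
      = ∑ k ∈ Finset.range (n + 1) with k ∈ E, (1 : ℝ) := by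
        rw [Finset.sum_filter]
        rfl
    _ ≤ ∑ k ∈ Finset.range a, (1 : ℝ) := by
        apply Finset.sum_le_sum_of_subset_of_nonneg
        · intro k hk
          simp only [Finset.mem_filter, Finset.mem_range] at hk ⊢
          exact h k hk.2 (by omega)
        · intros; exact zero_le_one
    _ = a := by simp

lemma posLD_exists {E : Set ℕ} (hE : 0 < lowerDensity E) (N : ℕ) : ∃ n, N ≤ n ∧ n ∈ E := by
  by_contra! hcon
  obtain ⟨c, hc, h1⟩ := (posLD_iff E).1 hE
  obtain ⟨N1, hN1⟩ := Filter.eventually_atTop.1 h1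
  obtain ⟨N2, hN2⟩ := exists_nat_gt ((N : ℝ) / c)
  have h2 := hN1 (max N1 N2) (le_max_left _ _)
  have h3 := count_le E (max N1 N2) N (fun k hk _ => by
    by_contra! h; exact hcon k h hk)
  rw [div_lt_iff₀ hc] at hN2
  have h4 : (N2 : ℝ) ≤ ((max N1 N2 : ℕ) : ℝ) := by exact_mod_cast le_max_right _ _
  nlinarith

lemma dens1 (F G : Set ℕ) (D n0 : ℕ) (hD : 1 ≤ D) (c : ℝ) (hc : 0 < c)
    (h : ∀ n, n0 ≤ n → n ∈ G → ∀ m, n ≤ m → m ∈ F → D * n < m)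
    (hF : ∀ᶠ n : ℕ in atTop,
      c * ((n : ℝ) + 1) ≤ ∑ k ∈ Finset.range (n + 1), Set.indicator F (fun _ => (1 : ℝ)) k)
    (hG : 0 < lowerDensity G) : c * D < 1 := by
  obtain ⟨N1, hN1⟩ := Filter.eventually_atTop.1 hF
  obtain ⟨n, hn, hnG⟩ := posLD_exists hG (n0 + N1 + 1)
  have h2 := hN1 (D * n) (by nlinarith)
  have h3 := count_le F (D * n) n (fun k hk hkn => by
    by_contra! h'
    have := h n (by omega) hnG k h' hk
    omega)
  have h4 := h2.trans h3
  push_cast at h4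
  have hn0 : (0 : ℝ) < n := by exact_mod_cast (by omega : 0 < n)
  by_contra! h5
  nlinarith

lemma dens2 (F G : Set ℕ) (D n0 : ℕ) (hD : 1 ≤ D) (c : ℝ) (hc : 0 < c)
    (h : ∀ n, n0 ≤ n → n ∈ G → ∀ m, n ≤ m → m ∈ F → D * n < m)
    (hG : ∀ᶠ n : ℕ in atTop,
      c * ((n : ℝ) + 1) ≤ ∑ k ∈ Finset.range (n + 1), Set.indicator G (fun _ => (1 : ℝ)) k)
    (hF : 0 < lowerDensity F) : c * D < 2 := by
  obtain ⟨N1, hN1⟩ := Filter.eventually_atTop.1 hG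
  obtain ⟨m, hm, hmF⟩ := posLD_exists hF (D * n0 + N1 + D)
  have h2 := hN1 m (by omega)
  have h3 := count_le G m (m / D + 1) (fun k hk hkn => by
    rw [Nat.lt_succ_iff, Nat.le_div_iff_mul_le (by omega), mul_comm]
    rcases le_or_gt n0 k with h' | h'
    · exact (h k h' hk m hkn hmF).le
    · have : D * k ≤ D * n0 := Nat.mul_le_mul_left _ h'.le
      omega)
  have h4 := h2.trans h3
  have h5 : (D : ℝ) * ((m / D : ℕ) : ℝ) ≤ m := by exact_mod_cast Nat.mul_div_le m D
  have h6 : (D : ℝ) ≤ m := by exact_mod_cast (by omega : D ≤ m)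
  have hD0 : (1 : ℝ) ≤ D := by exact_mod_cast hD
  push_cast at h4
  by_contra! h7
  have h8 : (D : ℝ) * (c * (m + 1)) ≤ D * ((m / D : ℕ) + 1) := by
    apply mul_le_mul_of_nonneg_left _ (by positivity)
    exact_mod_cast h4
  nlinarith

/-- times at which the rescaled orbit norm lies in `(1,2)`. -/
def EE (u : ℕ → ℝ) (l : ℝ) : Set ℕ := {n | 1 < l ^ n * u n ∧ l ^ n * u n < 2}

lemma gap (u : ℕ → ℝ) (C R l mu Q : ℝ) (D : ℕ) 
    (hu : ∀ n m, n ≤ m → u m ≤ C * R ^ (m - n) * u n) (hC : 1 ≤ C) (hR : 0 ≤ R)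
    (hl : 0 < l) (hmu : 0 < mu) (hQ : 1 < Q) (hRQ : R * mu ≤ Q) (hD : Q ^ (D + 1) ≤ l / mu) :
    ∃ n0, ∀ n, n0 ≤ n → n ∈ EE u l → ∀ m, n ≤ m → m ∈ EE u mu → D * n < m := by
  obtain ⟨n0, hn0⟩ := Filter.eventually_atTop.1
    ((tendsto_pow_atTop_atTop_of_one_lt hQ).eventually_ge_atTop (2 * C))
  refine ⟨n0, fun n hn hnl m hnm hm => ?_⟩
  have h2C := hn0 n hn
  obtain ⟨d, rfl⟩ := Nat.exists_eq_add_of_le hnm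
  have h1 := hu n (n + d) hnm
  rw [Nat.add_sub_cancel_left] at h1
  have hlp : 0 < l ^ n := by positivity
  have hmp : 0 < mu ^ n := by positivity
  have h2 : 1 < mu ^ (n + d) * (C * R ^ d * u n) :=
    hm.1.trans_le (mul_le_mul_of_nonneg_left h1 (by positivity))
  have h3 : l ^ n < 2 * C * (mu ^ n * (R * mu) ^ d) + 0 := by
    calc l ^ n = l ^ n * 1 := by ring
      _ < l ^ n * (mu ^ (n + d) * (C * R ^ d * u n)) := by gcongr
      _ = (C * (mu ^ n * (R * mu) ^ d)) * (l ^ n * u n) := by rw [mul_pow]; ring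
      _ ≤ (C * (mu ^ n * (R * mu) ^ d)) * 2 := by
          gcongr
          exact hnl.2.le
      _ = _ := by ring
  have h4 : (l / mu) ^ n < Q ^ n * Q ^ d := by
    rw [div_pow, div_lt_iff₀ hmp]
    calc l ^ n < 2 * C * (mu ^ n * (R * mu) ^ d) + 0 := h3
      _ ≤ Q ^ n * (mu ^ n * Q ^ d) + 0 := by gcongr
      _ = _ := by ring
  have h5 : Q ^ ((D + 1) * n) < Q ^ (n + d) := by
    rw [pow_mul, pow_add Q n d]
    refine lt_of_le_of_lt ?_ h4
    gcongr
  have h6 := (pow_lt_pow_iff_right₀ hQ).1 h5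
  nlinarith

lemma EE_disj (u : ℕ → ℝ) (l mu : ℝ) (hl : 0 < l) (hmu : 0 < mu) (hne : l ≠ mu) :
    ∃ n0, ∀ n, n0 ≤ n → n ∈ EE u l → n ∈ EE u mu → False := by
  wlog hlt : mu < l generalizing l mu
  · obtain ⟨n0, h⟩ := this mu l hmu hl hne.symm (lt_of_le_of_ne (not_lt.1 hlt) hne)
    exact ⟨n0, fun n hn h1 h2 => h n hn h2 h1⟩
  obtain ⟨n0, hn0⟩ := Filter.eventually_atTop.1
    ((tendsto_pow_atTop_atTop_of_one_lt ((one_lt_div hmu).2 hlt)).eventually_ge_atTop 2)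
  refine ⟨n0, fun n hn h1 h2 => ?_⟩
  have h3 := hn0 n hn
  have hmp : 0 < mu ^ n := by positivity
  rw [div_pow, le_div_iff₀ hmp] at h3
  have hu : 0 < u n := pos_of_mul_pos_right (lt_trans one_pos h2.1) hmp.le
  have h4 := h1.2
  have h5 := h2.1
  nlinarith

lemma countable_of (u : ℕ → ℝ) (L : Set ℝ) (hpos : ∀ l ∈ L, 0 < l)
    (h : ∀ l ∈ L, 0 < lowerDensity (EE u l)) : L.Countable := by
  set A : ℕ → Set ℝ := fun j => {l | l ∈ L ∧ ∀ᶠ n : ℕ in atTop, 1 / ((j : ℝ) + 1) * ((n : ℝ) + 1) ≤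
    ∑ k ∈ Finset.range (n + 1), Set.indicator (EE u l) (fun _ => (1 : ℝ)) k} with hA
  have hfin : ∀ j, (A j).Finite := by
    intro j
    by_contra hinf
    obtain ⟨s, hs, hcard⟩ := Set.Infinite.exists_subset_card_eq hinf (j + 2)
    have hdis : ∀ᶠ n : ℕ in atTop, ∀ l ∈ s, ∀ mu ∈ s, l ≠ mu → n ∈ EE u l → n ∈ EE u mu → False := by
      rw [Filter.eventually_all_finset]
      intro l hl
      rw [Filter.eventually_all_finset]
      intro mu hmu
      by_cases hne : l = mu
      · exact Filter.Eventually.of_forall fun n h => absurd hne h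
      · obtain ⟨n0, h0⟩ := EE_disj u l mu (hpos l (hs hl).1) (hpos mu (hs hmu).1) hne
        filter_upwards [eventually_ge_atTop n0] with n hn _ using h0 n hn
    obtain ⟨n1, hn1⟩ := Filter.eventually_atTop.1 hdis
    have hall : ∀ᶠ n : ℕ in atTop, ∀ l ∈ s, 1 / ((j : ℝ) + 1) * ((n : ℝ) + 1) ≤
        ∑ k ∈ Finset.range (n + 1), Set.indicator (EE u l) (fun _ => (1 : ℝ)) k := by
      rw [Filter.eventually_all_finset]
      exact fun l hl => (hs hl).2
    obtain ⟨N, hN1, hN2⟩ := (hall.and (eventually_ge_atTop (n1 + (j + 1) * ((j + 2) * n1)))).exists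
    have hup : ∑ l ∈ s, ∑ k ∈ Finset.range (N + 1), Set.indicator (EE u l) (fun _ => (1 : ℝ)) k
        ≤ ((j + 2 : ℕ) : ℝ) * n1 + ((N : ℝ) + 1) := by
      rw [Finset.sum_comm]
      have hk1 : ∀ k, ∑ l ∈ s, Set.indicator (EE u l) (fun _ => (1 : ℝ)) k ≤ (j + 2 : ℕ) := by
        intro k
        calc _ ≤ ∑ l ∈ s, (1 : ℝ) := Finset.sum_le_sum fun l _ =>
              Set.indicator_le_self' (fun _ _ => zero_le_one) k
          _ = _ := by rw [Finset.sum_const, hcard]; simp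
      have hk2 : ∀ k, n1 ≤ k → ∑ l ∈ s, Set.indicator (EE u l) (fun _ => (1 : ℝ)) k ≤ 1 := by
        intro k hk
        by_cases hex : ∃ l ∈ s, k ∈ EE u l
        · obtain ⟨l, hl, hkl⟩ := hex
          rw [Finset.sum_eq_single_of_mem l hl]
          · exact Set.indicator_le_self' (fun _ _ => zero_le_one) k
          · intro mu hmu hne
            exact Set.indicator_of_notMem (fun hk' => hn1 k hk mu hmu l hl hne hk' hkl) _
        · push Not at hex
          rw [Finset.sum_eq_zero fun l hl => Set.indicator_of_notMem (hex l hl) _]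
          exact zero_le_one
      calc _ ≤ ∑ k ∈ Finset.range (N + 1), ((if k < n1 then ((j + 2 : ℕ) : ℝ) else 0) + 1) := by
            refine Finset.sum_le_sum fun k _ => ?_
            split_ifs with hk
            · linarith [hk1 k]
            · linarith [hk2 k (not_lt.1 hk)]
        _ ≤ _ := by
            rw [Finset.sum_add_distrib, ← Finset.sum_filter, Finset.sum_const, Finset.sum_const,
              Finset.card_range]
            have : ((Finset.range (N + 1)).filter (· < n1)).card ≤ n1 := by
              calc _ ≤ (Finset.range n1).card := by
                    apply Finset.card_le_card
                    intro k hk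
                    simp only [Finset.mem_filter, Finset.mem_range] at hk ⊢
                    exact hk.2
                _ = n1 := Finset.card_range _
            have h' : (((Finset.range (N + 1)).filter (· < n1)).card : ℝ) ≤ n1 := by exact_mod_cast this
            simp only [nsmul_eq_mul, mul_one]
            push_cast
            nlinarith
    have hlo := Finset.sum_le_sum hN1
    rw [Finset.sum_const, hcard, nsmul_eq_mul] at hlo
    have h6 := hlo.trans hup
    have hj : (0 : ℝ) < (j : ℝ) + 1 := by positivity
    have h7 : ((j : ℝ) + 2) * ((N : ℝ) + 1) ≤ ((j : ℝ) + 1) * (((j : ℝ) + 2) * n1 + (N + 1)) := by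
      have := mul_le_mul_of_nonneg_left h6 hj.le
      push_cast at this
      have e : ((j : ℝ) + 1) * (((j : ℝ) + 2) * (1 / ((j : ℝ) + 1) * ((N : ℝ) + 1))) = ((j : ℝ) + 2) * ((N : ℝ) + 1) := by
        field_simp
      linarith
    have h8 : ((n1 : ℝ) + (j + 1) * ((j + 2) * n1)) ≤ N := by exact_mod_cast hN2
    have h9 : (0 : ℝ) ≤ n1 := by positivity
    nlinarith
  refine (Set.countable_iUnion fun j => (hfin j).countable).mono ?_
  intro l hl
  obtain ⟨c, hc, h1⟩ := (posLD_iff _).1 (h l hl)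
  obtain ⟨j, hj⟩ := exists_nat_one_div_lt hc
  refine Set.mem_iUnion.2 ⟨j, hl, ?_⟩
  filter_upwards [h1] with n hn
  refine le_trans ?_ hn
  gcongr

lemma geo (w : ℝ) (h0 : 0 < w) (h1 : w < 1) (m : ℕ) :
    ∃ a, a ≤ 2 / (1 - w) ∧ HasSum (fun n : ℕ => w ^ ((n - m) + (m - n))) a := by
  have hg := hasSum_geometric_of_lt_one h0.le h1
  refine ⟨(1 - w)⁻¹ + ∑ i ∈ Finset.range m, w ^ ((i - m) + (m - i)), ?_, ?_⟩
  · have : ∑ i ∈ Finset.range m, w ^ ((i - m) + (m - i)) ≤ (1 - w)⁻¹ := by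
      calc ∑ i ∈ Finset.range m, w ^ ((i - m) + (m - i))
          = ∑ i ∈ Finset.range m, w ^ (m - 1 - i + 1) := by
            refine Finset.sum_congr rfl fun i hi => ?_
            have := Finset.mem_range.1 hi
            congr 1
            omega
        _ = ∑ i ∈ Finset.range m, w ^ (i + 1) :=
            Finset.sum_range_reflect (fun i => w ^ (i + 1)) m
        _ ≤ ∑ i ∈ Finset.range m, w ^ i :=
            Finset.sum_le_sum fun i _ => pow_le_pow_of_le_one h0.le h1.le (by omega)
        _ ≤ _ := sum_le_hasSum _ (fun i _ => by positivity) hg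
    rw [div_eq_mul_inv]
    linarith
  · rw [← hasSum_nat_add_iff m]
    have e : (fun n => w ^ ((n + m - m) + (m - (n + m)))) = fun n => w ^ n := by
      funext n
      congr 1
      omega
    rw [e]
    exact hg

lemma term1 {w al be rho l l' : ℝ} {K m n : ℕ} (hw0 : 0 < w) (hw1 : w < 1) (hal : 0 < al)
    (hrho : 0 < rho) (hl0 : 0 < l) (hl : l ≤ be) (hl' : al ≤ l') (h1 : rho ≤ al * w ^ 6)
    (h2 : be * w ^ (3 * K) ≤ rho) (hmn : m ≤ n) (hK : K * m ≤ n) :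
    l ^ m * (l' ^ n)⁻¹ * rho ^ (n - m) ≤ w ^ (3 * n) := by
  have hbe : 0 < be := hl0.trans_le hl
  have hl'0 : 0 < l' := hal.trans_le hl'
  have e1 : be ^ m * rho ^ (n - m) ≤ w ^ (3 * n) * al ^ n := by
    have hr : 0 < rho ^ m := by positivity
    refine le_of_mul_le_mul_right ?_ hr
    calc be ^ m * rho ^ (n - m) * rho ^ m = be ^ m * rho ^ n := by
          rw [mul_assoc, ← pow_add, Nat.sub_add_cancel hmn]
      _ ≤ be ^ m * (al * w ^ 6) ^ n := by gcongr
      _ = (w ^ (3 * n) * al ^ n) * (be ^ m * w ^ (3 * n)) := by ring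
      _ ≤ (w ^ (3 * n) * al ^ n) * (be ^ m * w ^ (3 * K * m)) := by
          gcongr (w ^ (3 * n) * al ^ n) * (be ^ m * ?_)
          apply pow_le_pow_of_le_one hw0.le hw1.le
          nlinarith
      _ = (w ^ (3 * n) * al ^ n) * (be * w ^ (3 * K)) ^ m := by
          rw [mul_pow be, ← pow_mul]
      _ ≤ _ := by gcongr
  calc l ^ m * (l' ^ n)⁻¹ * rho ^ (n - m) ≤ be ^ m * (al ^ n)⁻¹ * rho ^ (n - m) := by gcongr
    _ = be ^ m * rho ^ (n - m) * (al ^ n)⁻¹ := by ring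
    _ ≤ w ^ (3 * n) * al ^ n * (al ^ n)⁻¹ := by gcongr
    _ = _ := by field_simp

lemma term2 {w al be th l l' : ℝ} {K m n : ℕ} (hw0 : 0 < w) (hw1 : w < 1) (hal : 0 < al)
    (hth : 0 < th) (hl0 : 0 < l) (hl : l ≤ be) (hl' : al ≤ l') (h1 : be * th ≤ w ^ 6)
    (h2 : w ^ (3 * K) ≤ al * th) (hmn : n ≤ m) (hK : K * n ≤ m) :
    l ^ m * (l' ^ n)⁻¹ * th ^ (m - n) ≤ w ^ (3 * m) := by
  have hbe : 0 < be := hl0.trans_le hl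
  have hl'0 : 0 < l' := hal.trans_le hl'
  have e1 : be ^ m * th ^ (m - n) ≤ w ^ (3 * m) * al ^ n := by
    have hr : 0 < th ^ n := by positivity
    refine le_of_mul_le_mul_right ?_ hr
    calc be ^ m * th ^ (m - n) * th ^ n = (be * th) ^ m := by
          rw [mul_assoc, ← pow_add, Nat.sub_add_cancel hmn, mul_pow]
      _ ≤ (w ^ 6) ^ m := by gcongr
      _ = w ^ (3 * m) * w ^ (3 * m) := by ring
      _ ≤ w ^ (3 * m) * w ^ (3 * K * n) := by
          gcongr w ^ (3 * m) * ?_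
          apply pow_le_pow_of_le_one hw0.le hw1.le
          nlinarith
      _ = w ^ (3 * m) * (w ^ (3 * K)) ^ n := by
          rw [← pow_mul]
      _ ≤ w ^ (3 * m) * (al * th) ^ n := by gcongr
      _ = _ := by rw [mul_pow]; ring
  calc l ^ m * (l' ^ n)⁻¹ * th ^ (m - n) ≤ be ^ m * (al ^ n)⁻¹ * th ^ (m - n) := by gcongr
    _ = be ^ m * th ^ (m - n) * (al ^ n)⁻¹ := by ring
    _ ≤ w ^ (3 * m) * al ^ n * (al ^ n)⁻¹ := by gcongr
    _ = _ := by field_simp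

lemma term3 {w al rho l : ℝ} {m d : ℕ} (hal : 0 < al)
    (hrho : 0 < rho) (hl : al ≤ l) (h1 : rho ≤ al * w ^ 6) (hw0 : 0 < w) :
    l ^ m * (l ^ (m + d))⁻¹ * rho ^ d ≤ w ^ (6 * d) := by
  have hl0 : 0 < l := hal.trans_le hl
  calc l ^ m * (l ^ (m + d))⁻¹ * rho ^ d = (rho / l) ^ d := by
        rw [pow_add, div_pow]; field_simp
    _ ≤ (w ^ 6) ^ d := by
        gcongr
        rw [div_le_iff₀ hl0]
        calc rho ≤ al * w ^ 6 := h1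
          _ ≤ l * w ^ 6 := by gcongr
          _ = _ := mul_comm _ _
    _ = _ := by rw [← pow_mul]

lemma term4 {w be th l : ℝ} {n d : ℕ} 
    (hth : 0 < th) (hl0 : 0 < l) (hl : l ≤ be) (h1 : be * th ≤ w ^ 6) :
    l ^ (n + d) * (l ^ n)⁻¹ * th ^ d ≤ w ^ (6 * d) := by
  calc l ^ (n + d) * (l ^ n)⁻¹ * th ^ d = (l * th) ^ d := by
        rw [pow_add, mul_pow]; field_simp
    _ ≤ (w ^ 6) ^ d := by
        gcongr
        calc l * th ≤ be * th := by gcongr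
          _ ≤ _ := h1
    _ = _ := by rw [← pow_mul]

lemma core {X : Type*} [NormedAddCommGroup X] [NormedSpace ℂ X] [CompleteSpace X]
    (T : X →L[ℂ] X) (X₀ : Set X) (S : X₀ → X₀)
    (hTS : ∀ x : X₀, T ((S x : X₀) : X) = (x : X))
    (lam : ℕ → ℝ) (y : ℕ → X₀) (C : ℕ → ℝ) (al be rho th w : ℝ) (K : ℕ) (hK : 2 ≤ K)
    (hw0 : 0 < w) (hw1 : w < 1) (hal : 0 < al) (hrho : 0 < rho) (hth : 0 < th)
    (hl1 : ∀ p, al ≤ lam p) (hl2 : ∀ p, lam p ≤ be) (hC : ∀ p, 1 ≤ C p)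
    (hS : ∀ p n, ‖((S^[n] (y p) : X₀) : X)‖ ≤ C p * rho ^ n)
    (hT : ∀ p n, ‖(T ^ n) (y p : X)‖ ≤ C p * th ^ n)
    (h1 : rho ≤ al * w ^ 6) (h2 : be * w ^ (3 * K) ≤ rho)
    (h3 : be * th ≤ w ^ 6) (h4 : w ^ (3 * K) ≤ al * th) :
    ∃ x : X, ∀ p, 0 < lowerDensity {n | ‖(lam p : ℂ) ^ n • (T ^ n) x - (y p : X)‖
      ≤ w ^ p * (3 / (1 - w))} := by
  classical
  have hlpos : ∀ p, 0 < lam p := fun p => hal.trans_le (hl1 p)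
  have hM : ∀ p, ∃ M : ℕ, p ≤ M ∧ ∀ n, M ≤ n → C p * w ^ n ≤ w ^ p := by
    intro p
    have ht : Tendsto (fun n : ℕ => C p * w ^ n) atTop (𝓝 (C p * 0)) :=
      (tendsto_pow_atTop_nhds_zero_of_lt_one hw0.le hw1).const_mul _
    rw [mul_zero] at ht
    obtain ⟨M, hM⟩ := Filter.eventually_atTop.1 (ht.eventually_le_const (by positivity : 0 < w ^ p))
    exact ⟨max p M, le_max_left _ _, fun n hn => hM n ((le_max_right _ _).trans hn)⟩
  choose M hM1 hM2 using hM
  obtain ⟨E, P, hE1, hE2, hE3⟩ := comb K hK M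
  have hTS' : ∀ (n : ℕ) (z : X₀), (T ^ n) ((S^[n] z : X₀) : X) = z := by
    intro n
    induction n with
    | zero => intro z; simp
    | succ n ih =>
      intro z
      rw [pow_succ, Function.iterate_succ_apply', mul_apply_eq_comp, hTS, ih]
  have hTS1 : ∀ (n k : ℕ) (z : X₀), (T ^ n) ((S^[n + k] z : X₀) : X) = (S^[k] z : X₀) := by
    intro n k z
    rw [Function.iterate_add_apply, hTS']
  have hTS2 : ∀ (n k : ℕ) (z : X₀), (T ^ (n + k)) ((S^[n] z : X₀) : X) = (T ^ k) z := by
    intro n k z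
    rw [add_comm, pow_add, mul_apply_eq_comp, hTS']
  set f : ℕ → X := fun n => if n ∈ E then ((lam (P n) : ℂ) ^ n)⁻¹ • ((S^[n] (y (P n)) : X₀) : X) else 0
    with hf
  -- general norm formula
  have hnorm : ∀ (l : ℝ), 0 < l → ∀ m, ∀ n ∈ E, ‖(l : ℂ) ^ m • (T ^ m) (f n)‖ =
      l ^ m * ((lam (P n)) ^ n)⁻¹ * ‖(T ^ m) ((S^[n] (y (P n)) : X₀) : X)‖ := by
    intro l hl m n hn
    simp only [hf, if_pos hn, map_smul, norm_smul, norm_inv, norm_pow, Complex.norm_real,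
      Real.norm_eq_abs, abs_of_pos hl, abs_of_pos (hlpos _)]
    ring
  have hge : ∀ n ∈ E, C (P n) * w ^ n ≤ w ^ (P n) := fun n hn => hM2 _ n (hE1 n hn)
  have hfsum : Summable f := by
    refine Summable.of_norm_bounded (summable_geometric_of_lt_one hw0.le hw1) fun n => ?_
    by_cases hn : n ∈ E
    · have e := hnorm 1 one_pos 0 n hn
      simp only [pow_zero, one_smul, one_mul, one_apply_eq_self] at e
      rw [e]
      have t := term3 (m := 0) (d := n) hal hrho (hl1 (P n)) h1 hw0
      rw [pow_zero, one_mul, zero_add] at t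
      calc (lam (P n) ^ n)⁻¹ * ‖((S^[n] (y (P n)) : X₀) : X)‖
          ≤ (lam (P n) ^ n)⁻¹ * (C (P n) * rho ^ n) := by
            have := hlpos (P n)
            gcongr
            exact hS _ _
        _ = C (P n) * ((lam (P n) ^ n)⁻¹ * rho ^ n) := by ring
        _ ≤ C (P n) * w ^ (6 * n) := by
            have := hC (P n)
            gcongr
        _ ≤ C (P n) * w ^ (n + n) := by
            have := hC (P n)
            gcongr C (P n) * ?_
            exact pow_le_pow_of_le_one hw0.le hw1.le (by omega)
        _ = (C (P n) * w ^ n) * w ^ n := by rw [pow_add]; ring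
        _ ≤ 1 * w ^ n := by
            gcongr
            exact (hge n hn).trans (pow_le_one₀ hw0.le hw1.le)
        _ = w ^ n := one_mul _
    · simp only [hf, if_neg hn, norm_zero]
      positivity
  refine ⟨∑' n, f n, fun p => posLD_mono ?_ (hE3 p)⟩
  rintro m ⟨hmE, rfl⟩
  show ‖_‖ ≤ _
  set p := P m with hp
  have hmM : M p ≤ m := hE1 m hmE
  have hwm : w ^ m ≤ w ^ p := pow_le_pow_of_le_one hw0.le hw1.le ((hM1 p).trans hmM)
  -- termwise
  have hbd : ∀ n, ‖(lam p : ℂ) ^ m • (T ^ m) (f n) - (if n = m then (y p : X) else 0)‖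
      ≤ w ^ p * (w ^ n + w ^ ((n - m) + (m - n))) := by
    intro n
    by_cases hn : n ∈ E
    swap
    · have : n ≠ m := fun h => hn (h ▸ hmE)
      simp only [hf, if_neg hn, if_neg this, map_zero, smul_zero, sub_zero, norm_zero]
      positivity
    rcases lt_trichotomy n m with hlt | heq | hgt
    · rw [if_neg hlt.ne, sub_zero, hnorm _ (hlpos p) m n hn]
      obtain ⟨d, rfl⟩ := Nat.exists_eq_add_of_lt hlt
      have hb : ‖(T ^ (n + d + 1)) ((S^[n] (y (P n)) : X₀) : X)‖ ≤ C (P n) * th ^ (d + 1) := by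
        rw [add_assoc, hTS2]
        exact hT _ _
      have hCn := hC (P n)
      have hln := hlpos (P n)
      have hlp := hlpos p
      rcases hE2 n hn _ hmE hlt with ⟨hPP, hgap⟩ | hKn
      · rw [← hp] at hPP
        rw [hPP] at hb hCn hln hgap ⊢
        have hgap' : M p ≤ d + 1 := by omega
        have t := term4 (n := n) (d := d + 1) hth (hlpos p) (hl2 p) h3
        have e : n - (n + d + 1) + (n + d + 1 - n) = d + 1 := by omega
        rw [e]
        calc _ ≤ lam p ^ (n + d + 1) * (lam p ^ n)⁻¹ * (C p * th ^ (d + 1)) := by gcongr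
          _ = C p * (lam p ^ (n + (d + 1)) * (lam p ^ n)⁻¹ * th ^ (d + 1)) := by ring
          _ ≤ C p * w ^ (6 * (d + 1)) := by gcongr
          _ ≤ C p * w ^ ((d + 1) + (d + 1)) := by
              gcongr C p * ?_
              exact pow_le_pow_of_le_one hw0.le hw1.le (by omega)
          _ = (C p * w ^ (d + 1)) * w ^ (d + 1) := by rw [pow_add]; ring
          _ ≤ w ^ p * w ^ (d + 1) := by
              gcongr
              exact hM2 p _ hgap'
          _ ≤ _ := by
              gcongr
              have : 0 < w ^ n := by positivity
              linarith
      · have t := term2 (K := K) (m := n + d + 1) (n := n) hw0 hw1 hal hth (hlpos p) (hl2 p) (hl1 (P n)) h3 h4 (by omega) hKn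
        have e : n + d + 1 - n = d + 1 := by omega
        rw [e] at t
        calc _ ≤ lam p ^ (n + d + 1) * (lam (P n) ^ n)⁻¹ * (C (P n) * th ^ (d + 1)) := by gcongr
          _ = C (P n) * (lam p ^ (n + d + 1) * (lam (P n) ^ n)⁻¹ * th ^ (d + 1)) := by ring
          _ ≤ C (P n) * w ^ (3 * (n + d + 1)) := by gcongr
          _ ≤ C (P n) * w ^ (n + n + (n + d + 1)) := by
              gcongr C (P n) * ?_
              exact pow_le_pow_of_le_one hw0.le hw1.le (by omega)
          _ = (C (P n) * w ^ n) * w ^ n * w ^ (n + d + 1) := by rw [pow_add, pow_add]; ring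
          _ ≤ 1 * w ^ n * w ^ p := by
              gcongr
              exact (hge n hn).trans (pow_le_one₀ hw0.le hw1.le)
          _ = w ^ p * w ^ n := by ring
          _ ≤ _ := by
              gcongr
              have : 0 < w ^ (n - (n + d + 1) + (n + d + 1 - n)) := by positivity
              linarith
    · subst heq
      have e : (lam p : ℂ) ^ n • (T ^ n) (f n) = y p := by
        have hne : (lam p : ℂ) ^ n ≠ 0 := pow_ne_zero _ (by exact_mod_cast (hlpos p).ne')
        simp only [hf, if_pos hn, map_smul, hTS', ← hp]
        rw [smul_smul, mul_inv_cancel₀ hne, one_smul]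
      rw [if_pos rfl, e, sub_self, norm_zero]
      positivity
    · rw [if_neg hgt.ne', sub_zero, hnorm _ (hlpos p) m n hn]
      obtain ⟨d, rfl⟩ := Nat.exists_eq_add_of_lt hgt
      have hb : ‖(T ^ m) ((S^[m + d + 1] (y (P (m + d + 1))) : X₀) : X)‖ ≤ C (P (m + d + 1)) * rho ^ (d + 1) := by
        rw [add_assoc m d 1, hTS1]
        exact hS _ _
      have hCn := hC (P (m + d + 1))
      have hln := hlpos (P (m + d + 1))
      have hlp := hlpos p
      rcases hE2 m hmE _ hn hgt with ⟨hPP, hgap⟩ | hKn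
      · rw [← hp] at hPP hgap
        rw [← hPP] at hb hCn hln ⊢
        have hgap' : M p ≤ d + 1 := by omega
        have t := term3 (m := m) (d := d + 1) hal hrho (hl1 p) h1 hw0
        have e : m + d + 1 - m + (m - (m + d + 1)) = d + 1 := by omega
        rw [e]
        calc _ ≤ lam p ^ m * (lam p ^ (m + d + 1))⁻¹ * (C p * rho ^ (d + 1)) := by gcongr
          _ = C p * (lam p ^ m * (lam p ^ (m + (d + 1)))⁻¹ * rho ^ (d + 1)) := by ring
          _ ≤ C p * w ^ (6 * (d + 1)) := by gcongr
          _ ≤ C p * w ^ ((d + 1) + (d + 1)) := by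
              gcongr C p * ?_
              exact pow_le_pow_of_le_one hw0.le hw1.le (by omega)
          _ = (C p * w ^ (d + 1)) * w ^ (d + 1) := by rw [pow_add]; ring
          _ ≤ w ^ p * w ^ (d + 1) := by
              gcongr
              exact hM2 p _ hgap'
          _ ≤ _ := by
              gcongr
              have : 0 < w ^ (m + d + 1) := by positivity
              linarith
      · have hge' := hge _ hn
        set n := m + d + 1 with hnn
        have t := term1 (K := K) (m := m) (n := n) hw0 hw1 hal hrho (hlpos p) (hl2 p) (hl1 (P n)) h1 h2 (by omega) hKn
        have e : n - m = d + 1 := by omega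
        rw [e] at t
        calc _ ≤ lam p ^ m * (lam (P n) ^ n)⁻¹ * (C (P n) * rho ^ (d + 1)) := by gcongr
          _ = C (P n) * (lam p ^ m * (lam (P n) ^ n)⁻¹ * rho ^ (d + 1)) := by ring
          _ ≤ C (P n) * w ^ (3 * n) := by gcongr
          _ ≤ C (P n) * w ^ (n + n + m) := by
              gcongr C (P n) * ?_
              exact pow_le_pow_of_le_one hw0.le hw1.le (by omega)
          _ = (C (P n) * w ^ n) * w ^ n * w ^ m := by rw [pow_add, pow_add]; ring
          _ ≤ 1 * w ^ n * w ^ p := by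
              gcongr
              exact hge'.trans (pow_le_one₀ hw0.le hw1.le)
          _ = w ^ p * w ^ n := by ring
          _ ≤ _ := by
              gcongr
              have : 0 < w ^ (n - m + (m - n)) := by positivity
              linarith
  obtain ⟨a, ha, hsa⟩ := geo w hw0 hw1 m
  have hs1 : HasSum (fun n => (lam p : ℂ) ^ m • (T ^ m) (f n)) ((lam p : ℂ) ^ m • (T ^ m) (∑' n, f n)) :=
    ((T ^ m).hasSum hfsum.hasSum).const_smul _
  have hs2 := hs1.sub (hasSum_ite_eq m (y p : X))
  have hs3 := ((hasSum_geometric_of_lt_one hw0.le hw1).add hsa).mul_left (w ^ p)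
  have := hs2.norm_le_of_bounded hs3 hbd
  refine this.trans ?_
  gcongr
  calc (1 - w)⁻¹ + a ≤ (1 - w)⁻¹ + 2 / (1 - w) := by gcongr
    _ = _ := by ring

lemma smul_pow_apply' {X : Type*} [NormedAddCommGroup X] [NormedSpace ℂ X]
    (T : X →L[ℂ] X) (l : ℝ) (n : ℕ) (x : X) :
    (((l : ℂ) • T) ^ n) x = (l : ℂ) ^ n • (T ^ n) x := by
  rw [smul_pow]; rfl

lemma backward {X : Type*} [NormedAddCommGroup X] [NormedSpace ℂ X]
    [CompleteSpace X] [TopologicalSpace.SeparableSpace X]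
    (T : X →L[ℂ] X) (X₀ : Set X) (hX₀ : Dense X₀) (S : X₀ → X₀)
    (hTS : ∀ x : X₀, T ((S x : X₀) : X) = (x : X))
    (haT : aT X₀ S = (spectralRadius ℂ T)⁻¹)
    (hbT : bT T X₀ = ⊤)
    (Λ : Set ℝ) (hne : Λ.Nonempty) (hcount : Λ.Countable) (hcomp : IsCompact (closure Λ))
    (hsub : closure Λ ⊆ {l : ℝ | (spectralRadius ℂ T)⁻¹ < ENNReal.ofReal l}) :
    ∃ x : X, ∀ l ∈ Λ, x ∈ FHC ((l : ℂ) • T) := by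
  obtain ⟨al, halm, hal1⟩ := hcomp.exists_isLeast hne.closure
  obtain ⟨be, -, hbe1⟩ := hcomp.exists_isGreatest hne.closure
  have hral : (spectralRadius ℂ T)⁻¹ < ENNReal.ofReal al := hsub halm
  have hal : 0 < al := ENNReal.ofReal_pos.1 (lt_of_le_of_lt (zero_le) hral)
  obtain ⟨rho', hr1, hr2⟩ := ENNReal.lt_iff_exists_nnreal_btwn.1 hral
  obtain ⟨rho, hrho'⟩ : ∃ rho : ℝ, rho = (rho' : ℝ) := ⟨_, rfl⟩
  have hofr : ENNReal.ofReal rho = rho' := by rw [hrho']; exact ENNReal.ofReal_coe_nnreal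
  have hrho : 0 < rho := by
    have : (0 : ℝ≥0∞) < rho' := lt_of_le_of_lt (zero_le) hr1
    rw [hrho']; exact_mod_cast this
  have hrhoal : rho < al := by
    rw [← hofr] at hr2
    exact (ENNReal.ofReal_lt_ofReal_iff hal).1 hr2
  have hbe : 0 < be := hal.trans_le (hbe1 halm)
  obtain ⟨w, hw0, hw1, hw6⟩ : ∃ w : ℝ, 0 < w ∧ w < 1 ∧ w ^ 6 = rho / al := by
    have hq : 0 < rho / al := by positivity
    have hq1 : rho / al < 1 := (div_lt_one hal).2 hrhoal
    refine ⟨(rho / al) ^ ((1 : ℝ) / 6), by positivity, Real.rpow_lt_one hq.le hq1 (by norm_num), ?_⟩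
    rw [← Real.rpow_natCast, ← Real.rpow_mul hq.le]
    norm_num
  have h1 : rho ≤ al * w ^ 6 := by rw [hw6]; field_simp; exact le_rfl
  set th : ℝ := w ^ 6 / be with hthd
  have hth : 0 < th := by positivity
  have h3 : be * th ≤ w ^ 6 := by rw [hthd]; field_simp; exact le_rfl
  obtain ⟨K, hK, hK1, hK2⟩ : ∃ K : ℕ, 2 ≤ K ∧ be * w ^ (3 * K) ≤ rho ∧ w ^ (3 * K) ≤ al * th := by
    have ht0 : Tendsto (fun K : ℕ => w ^ (3 * K)) atTop (𝓝 0) :=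
      (tendsto_pow_atTop_nhds_zero_of_lt_one hw0.le hw1).comp
        (Filter.tendsto_id.const_mul_atTop' (by norm_num))
    have ht1 := ht0.const_mul be
    rw [mul_zero] at ht1
    obtain ⟨K, ⟨a, b⟩, c⟩ := (((ht1.eventually_le_const hrho).and
      (ht0.eventually_le_const (by positivity : 0 < al * th))).and (eventually_ge_atTop 2)).exists
    exact ⟨K, c, a, b⟩
  have hCS : ∀ z : X₀, ∃ C : ℝ, 1 ≤ C ∧ (∀ n, ‖((S^[n] z : X₀) : X)‖ ≤ C * rho ^ n) ∧
      ∀ n, ‖(T ^ n) (z : X)‖ ≤ C * th ^ n := by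
    intro z
    obtain ⟨C1, hC1, hC1'⟩ := growth (fun n => ‖((S^[n] z : X₀) : X)‖₊) rho hrho (by
      rw [hofr]
      refine lt_of_le_of_lt ?_ hr1
      rw [← haT]
      exact le_iSup (fun x : X₀ => Filter.limsup
        (fun n : ℕ => (‖((S^[n] x : X₀) : X)‖₊ : ℝ≥0∞) ^ (1 / (n : ℝ))) Filter.atTop) z)
    obtain ⟨C2, hC2, hC2'⟩ := growth (fun n => ‖(T ^ n) (z : X)‖₊) th hth (by
      have hz := iInf_eq_top.1 hbT z
      rw [ENNReal.inv_eq_top] at hz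
      rw [hz]
      exact ENNReal.ofReal_pos.2 hth)
    refine ⟨max C1 C2, hC1.trans (le_max_left _ _), fun n => ?_, fun n => ?_⟩
    · refine (hC1' n).trans ?_
      gcongr
      exact le_max_left _ _
    · refine (hC2' n).trans ?_
      gcongr
      exact le_max_right _ _
  choose C hC hC1 hC2 using hCS
  obtain ⟨f, hf⟩ := hcount.exists_eq_range hne
  have : Nonempty X₀ := hX₀.nonempty.to_subtype
  have : SecondCountableTopology X := UniformSpace.secondCountable_of_separable X
  set d := TopologicalSpace.denseSeq X₀ with hd
  set lam : ℕ → ℝ := fun p => f (Nat.unpair p).1 with hlam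
  set y : ℕ → X₀ := fun p => d (Nat.unpair (Nat.unpair p).2).1 with hy
  have hmem : ∀ p, lam p ∈ closure Λ := fun p => subset_closure (by rw [hf]; exact ⟨_, rfl⟩)
  obtain ⟨x, hx⟩ := core T X₀ S hTS lam y (fun p => C (y p)) al be rho th w K hK hw0 hw1 hal hrho hth
    (fun p => hal1 (hmem p)) (fun p => hbe1 (hmem p)) (fun p => hC _) (fun p n => hC1 _ n)
    (fun p n => hC2 _ n) h1 hK1 h3 hK2
  refine ⟨x, fun l hl U hU hUne => ?_⟩
  rw [hf] at hl
  obtain ⟨i, rfl⟩ := hl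
  obtain ⟨u, huU, huX⟩ := hX₀.inter_open_nonempty U hU hUne
  obtain ⟨j, hj⟩ := (TopologicalSpace.denseRange_denseSeq X₀).exists_mem_open
    (hU.preimage continuous_subtype_val) ⟨⟨u, huX⟩, huU⟩
  obtain ⟨ε, hε, hball⟩ := Metric.isOpen_iff.1 hU _ hj
  have ht : Tendsto (fun p : ℕ => w ^ p * (3 / (1 - w))) atTop (𝓝 (0 * (3 / (1 - w)))) :=
    (tendsto_pow_atTop_nhds_zero_of_lt_one hw0.le hw1).mul_const _
  rw [zero_mul] at ht
  obtain ⟨k, hk⟩ := Filter.eventually_atTop.1 (ht.eventually_lt_const hε)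
  set p := Nat.pair i (Nat.pair j k) with hp
  have hpk : k ≤ p := (Nat.right_le_pair j k).trans (Nat.right_le_pair i _)
  have hlp : lam p = f i := by simp [hlam, hp]
  have hyp : y p = d j := by simp [hy, hp]
  refine posLD_mono ?_ (hx p)
  intro n hn
  apply hball
  rw [Metric.mem_ball, dist_eq_norm, smul_pow_apply']
  have := lt_of_le_of_lt hn (hk p hpk)
  rwa [hlp, hyp] at this

lemma forward {X : Type*} [NormedAddCommGroup X] [NormedSpace ℂ X]
    [CompleteSpace X] [Nontrivial X]
    (T : X →L[ℂ] X)
    (Λ : Set ℝ) (hΛpos : Λ ⊆ Set.Ioi (0 : ℝ))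
    (hΛ2 : ∃ a ∈ Λ, ∃ b ∈ Λ, a ≠ b) (x : X) (hx : ∀ l ∈ Λ, x ∈ FHC ((l : ℂ) • T)) :
      (Λ.Countable ∧ IsCompact (closure Λ) ∧
        closure Λ ⊆ {l : ℝ | (spectralRadius ℂ T)⁻¹ < ENNReal.ofReal l}) := by
  set u : ℕ → ℝ := fun n => ‖(T ^ n) x‖ with hu
  have hpos : ∀ l ∈ Λ, 0 < l := fun l hl => hΛpos hl
  have hE : ∀ l ∈ Λ, 0 < lowerDensity (EE u l) := by
    intro l hl
    obtain ⟨v, hv⟩ := exists_norm_eq X (by norm_num : (0 : ℝ) ≤ 3 / 2)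
    have := hx l hl {v | 1 < ‖v‖ ∧ ‖v‖ < 2}
      ((isOpen_lt continuous_const continuous_norm).inter (isOpen_lt continuous_norm continuous_const))
      ⟨v, by rw [Set.mem_ofPred_eq, hv]; norm_num⟩
    refine posLD_mono ?_ this
    intro n hn
    simp only [Set.mem_ofPred_eq, smul_pow_apply', norm_smul, norm_pow, Complex.norm_real,
      Real.norm_eq_abs, abs_of_pos (hpos l hl)] at hn
    exact hn
  have hgr : ∀ C R : ℝ, (∀ k, ‖T ^ k‖ ≤ C * R ^ k) → ∀ n m, n ≤ m → u m ≤ C * R ^ (m - n) * u n := by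
    intro C R h n m hnm
    obtain ⟨d, rfl⟩ := Nat.exists_eq_add_of_le hnm
    rw [Nat.add_sub_cancel_left]
    simp only [hu]
    rw [add_comm n d, pow_add, mul_apply_eq_comp]
    exact ((T ^ d).le_opNorm _).trans (mul_le_mul_of_nonneg_right (h d) (norm_nonneg _))
  refine ⟨countable_of u Λ hpos hE, ?_, ?_⟩
  · have hbdd : BddAbove Λ := by
      by_contra hub
      obtain ⟨mu, hmu, -⟩ := hΛ2
      have hmu0 := hpos mu hmu
      obtain ⟨c, hc, hc1⟩ := (posLD_iff _).1 (hE mu hmu)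
      obtain ⟨D, hD⟩ := exists_nat_gt (1 / c)
      rw [div_lt_iff₀ hc] at hD
      set Q : ℝ := ‖T‖ * mu + 2 with hQd
      have hQ : 1 < Q := by
        have : 0 ≤ ‖T‖ * mu := by positivity
        linarith
      obtain ⟨l, hl, hlt⟩ := not_bddAbove_iff.1 hub (mu * Q ^ (D + 1))
      obtain ⟨n0, hn0⟩ := gap u 1 ‖T‖ l mu Q D (hgr 1 ‖T‖ fun k => by
          rw [one_mul]; exact norm_pow_le T k) le_rfl (norm_nonneg _) (hpos l hl) hmu0 hQ
        (by linarith) (by rw [le_div_iff₀ hmu0]; linarith)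
      have hD1 : 1 ≤ D := by
        rcases Nat.eq_zero_or_pos D with h | h
        · subst h; norm_num at hD
        · exact h
      have := dens1 (EE u mu) (EE u l) D n0 hD1 c hc hn0 hc1 (hE l hl)
      linarith
    exact (Metric.isBounded_of_bddAbove_of_bddBelow hbdd ⟨0, fun l hl => (hpos l hl).le⟩).isCompact_closure
  · intro z hz
    by_contra hzn
    simp only [Set.mem_ofPred_eq, not_lt] at hzn
    have hrfin : spectralRadius ℂ T ≠ ⊤ := by
      refine ne_top_of_le_ne_top ?_ (spectrum.spectralRadius_le_nnnorm T)
      exact ENNReal.coe_ne_top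
    set r := (spectralRadius ℂ T).toReal with hr
    have hofr : ENNReal.ofReal r = spectralRadius ℂ T := ENNReal.ofReal_toReal hrfin
    have hr0 : 0 ≤ r := ENNReal.toReal_nonneg
    have hz0 : 0 ≤ z := closure_minimal (fun l hl => (hpos l hl).le : Λ ⊆ Set.Ici 0) isClosed_Ici hz
    have hzr : z * r ≤ 1 := by
      have h := ENNReal.mul_le_of_le_div (c := spectralRadius ℂ T) (a := ENNReal.ofReal z) (b := 1)
        (by rwa [one_div])
      rw [← hofr, ← ENNReal.ofReal_mul hz0] at h
      exact ENNReal.ofReal_le_one.1 h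
    obtain ⟨l, hl, mu0, hmu0, hlt, hmr⟩ : ∃ l ∈ Λ, ∃ mu0 ∈ closure Λ, mu0 < l ∧ mu0 * r ≤ 1 := by
      obtain ⟨l, hl, b, hb, hbl⟩ : ∃ l ∈ Λ, ∃ b ∈ Λ, b < l := by
        obtain ⟨a, ha, b, hb, hab⟩ := hΛ2
        rcases lt_or_gt_of_ne hab with h | h
        · exact ⟨b, hb, a, ha, h⟩
        · exact ⟨a, ha, b, hb, h⟩
      rcases lt_or_ge z l with h | h
      · exact ⟨l, hl, z, hz, h, hzr⟩
      · refine ⟨l, hl, b, subset_closure hb, hbl, le_trans ?_ hzr⟩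
        gcongr
        linarith
    have hl0 := hpos l hl
    obtain ⟨c, hc, hc1⟩ := (posLD_iff _).1 (hE l hl)
    obtain ⟨D, hD⟩ := exists_nat_gt (2 / c)
    rw [div_lt_iff₀ hc] at hD
    have hD1 : 1 ≤ D := by
      rcases Nat.eq_zero_or_pos D with h | h
      · subst h; norm_num at hD
      · exact h
    obtain ⟨nu, hnu1, hnu2⟩ := exists_between hlt
    have hmu00 : 0 ≤ mu0 := closure_minimal (fun l hl => (hpos l hl).le : Λ ⊆ Set.Ici 0) isClosed_Ici hmu0
    have hnu0 : 0 < nu := by linarith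
    obtain ⟨Q, hQ, hQD⟩ : ∃ Q : ℝ, 1 < Q ∧ Q ^ (D + 1) < l / nu := by
      have hcont : ContinuousAt (fun q : ℝ => q ^ (D + 1)) 1 := by fun_prop
      have hlt' : (fun q : ℝ => q ^ (D + 1)) 1 < l / nu := by
        simp only [one_pow]
        exact (one_lt_div hnu0).2 hnu2
      have hev : ∀ᶠ q in 𝓝[>] (1 : ℝ), q ^ (D + 1) < l / nu :=
        (hcont.eventually (gt_mem_nhds hlt')).filter_mono nhdsWithin_le_nhds
      obtain ⟨Q, h1, h2⟩ := (hev.and self_mem_nhdsWithin).exists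
      exact ⟨Q, h2, h1⟩
    obtain ⟨mu, ⟨hmu1, hmu2⟩, hmu⟩ : (({t : ℝ | t < nu ∧ t * r < Q}) ∩ Λ).Nonempty := by
      apply mem_closure_iff.1 hmu0
      · exact (isOpen_lt continuous_id continuous_const).inter
          (isOpen_lt (continuous_id.mul continuous_const) continuous_const)
      · exact ⟨hnu1, lt_of_le_of_lt hmr hQ⟩
    have hmup := hpos mu hmu
    have hRpos : 0 < Q / mu := by positivity
    have hrR : spectralRadius ℂ T < ENNReal.ofReal (Q / mu) := by
      rw [← hofr, ENNReal.ofReal_lt_ofReal_iff hRpos, lt_div_iff₀ hmup]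
      linarith
    obtain ⟨C, hC, hC1⟩ := growth (fun n => ‖T ^ n‖₊) (Q / mu) hRpos (by
      have := (spectrum.pow_nnnorm_pow_one_div_tendsto_nhds_spectralRadius T).limsup_eq
      rw [this]
      exact hrR)
    obtain ⟨n0, hn0⟩ := gap u C (Q / mu) l mu Q D (hgr C (Q / mu) hC1) hC hRpos.le hl0 hmup hQ
      (by rw [div_mul_cancel₀ _ hmup.ne']) (hQD.le.trans (by gcongr))
    have := dens2 (EE u mu) (EE u l) D n0 hD1 c hc hn0 hc1 (hE mu hmu)
    linarith

/-- Corollary 2.14: if `a_T(X₀,S) = 1/r(T)` and `b_T(X₀,S) = +∞`, then the multiples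
`λT`, `λ ∈ Λ` (where `Λ ⊆ (0,∞)` has at least two elements), share a common frequently
hypercyclic vector if and only if `Λ` is countable and relatively compact in
`(1/r(T), +∞)`. -/
theorem stmt6 {X : Type*} [NormedAddCommGroup X] [NormedSpace ℂ X]
    [CompleteSpace X] [TopologicalSpace.SeparableSpace X]
    (T : X →L[ℂ] X) (X₀ : Set X) (hX₀ : Dense X₀) (S : X₀ → X₀)
    (hTS : ∀ x : X₀, T ((S x : X₀) : X) = (x : X))
    (haT : aT X₀ S = (spectralRadius ℂ T)⁻¹)
    (hbT : bT T X₀ = ⊤)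
    (Λ : Set ℝ) (hΛpos : Λ ⊆ Set.Ioi (0 : ℝ))
    (hΛ2 : ∃ a ∈ Λ, ∃ b ∈ Λ, a ≠ b) :
    (∃ x : X, ∀ l ∈ Λ, x ∈ FHC ((l : ℂ) • T)) ↔
      (Λ.Countable ∧ IsCompact (closure Λ) ∧
        closure Λ ⊆ {l : ℝ | (spectralRadius ℂ T)⁻¹ < ENNReal.ofReal l}) := by

  constructor
  · rintro ⟨x, hx⟩
    have hnt : Nontrivial X := by
      by_contra hn
      rw [not_nontrivial_iff_subsingleton] at hn
      have h1 : aT X₀ S = 0 := by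
        unfold aT
        rw [ENNReal.iSup_eq_zero]
        intro z
        apply Filter.Tendsto.limsup_eq
        apply tendsto_const_nhds.congr'
        filter_upwards [eventually_gt_atTop 0] with n hn0
        rw [Subsingleton.elim ((S^[n] z : X₀) : X) 0]
        have : (0 : ℝ) < 1 / (n : ℝ) := by positivity
        simp only [nnnorm_zero, ENNReal.coe_zero]
        rw [ENNReal.zero_rpow_of_pos this]
      have h2 : spectralRadius ℂ T = 0 := by
        rw [Subsingleton.elim T 0]
        exact spectrum.spectralRadius_zero
      rw [h1, h2, ENNReal.inv_zero] at haT
      exact ENNReal.zero_ne_top haT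
    exact forward T Λ hΛpos hΛ2 x hx
  · rintro ⟨h1, h2, h3⟩
    obtain ⟨a, ha, -⟩ := hΛ2
    exact backward T X₀ hX₀ S hTS haT hbT Λ ⟨a, ha⟩ h1 h2 h3
end

section
/- Let 1 ≤ p < ∞, let B_w be a bounded weighted backward shift on ℓ^p(ℕ), and let Λ ⊆ (0,+∞) be nonempty. Then: (1) ⋂_{λ∈Λ} FHC(λB_w) is nonempty whenever Λ is a countable relatively compact subset of (r_{p,w}^{−1}, +∞); (2) ⋂_{λ∈Λ} FHC(λB_w) is empty whenever Λ is unbounded, or Λ has at least two elements and r(B_w)^{−1} ≥ inf(Λ). In particular, if r_{p,w} = r(B_w) and Λ has at least two elements, then ⋂_{λ∈Λ} FHC(λB_w) ≠ ∅ if and only if Λ is countable and relatively compact in (r_{p,w}^{−1}, +∞). -/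
open Filter Topology
open scoped ENNReal NNReal

/-- `r_{p,w}⁻¹ = limsup_n |w₁⋯w_n|^{-1/n}`, computed in `ℝ≥0∞`. -/
noncomputable def rpwInv (w : ℕ → ℂ) : ℝ≥0∞ :=
  Filter.limsup
    (fun n : ℕ => ((∏ k ∈ Finset.Icc 1 n, (‖w k‖₊ : ℝ≥0∞))⁻¹) ^ (1 / (n : ℝ)))
    Filter.atTop

/-- Counting function of a set. -/
noncomputable def cnt (E : Set ℕ) (n : ℕ) : ℝ :=
  ∑ k ∈ Finset.range (n + 1), Set.indicator E (fun _ => (1 : ℝ)) k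

lemma cnt_nonneg (E : Set ℕ) (n : ℕ) : 0 ≤ cnt E n :=
  Finset.sum_nonneg fun _ _ => Set.indicator_nonneg (fun _ _ => zero_le_one) _

lemma cnt_le_card (E : Set ℕ) (n : ℕ) (T : Finset ℕ) (h : ∀ k, k ≤ n → k ∈ E → k ∈ T) :
    cnt E n ≤ T.card := by
  classical
  have h1 : cnt E n = ((Finset.range (n+1)).filter (· ∈ E)).card := by
    simp [cnt, Set.indicator_apply]
  rw [h1]
  exact_mod_cast Finset.card_le_card (by
    intro k hk
    simp only [Finset.mem_filter, Finset.mem_range] at hk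
    exact h k (by omega) hk.2)

lemma card_le_cnt (E : Set ℕ) (n : ℕ) (T : Finset ℕ) (h : ∀ k ∈ T, k ≤ n ∧ k ∈ E) :
    (T.card : ℝ) ≤ cnt E n := by
  classical
  have h1 : cnt E n = ((Finset.range (n+1)).filter (· ∈ E)).card := by
    simp [cnt, Set.indicator_apply]
  rw [h1]
  exact_mod_cast Finset.card_le_card (by
    intro k hk
    simp only [Finset.mem_filter, Finset.mem_range]
    exact ⟨by have := (h k hk).1; omega, (h k hk).2⟩)

lemma cnt_le (E : Set ℕ) (n : ℕ) : cnt E n ≤ n + 1 := by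
  have := cnt_le_card E n (Finset.range (n+1)) (by intro k hk _; simp; omega)
  simpa using this

lemma lowerDensity_pos_of (E : Set ℕ) (c : ℝ) (hc : 0 < c)
    (h : ∀ᶠ n : ℕ in atTop, c * ((n : ℝ) + 1) ≤ cnt E n) : 0 < lowerDensity E := by
  refine lt_of_lt_of_le hc ?_
  refine le_liminf_of_le ?_ ?_
  · refine IsBoundedUnder.isCoboundedUnder_ge ?_
    refine isBoundedUnder_of ⟨1, fun n => ?_⟩
    rw [div_le_one (by positivity)]
    exact cnt_le E n
  · filter_upwards [h] with n hn
    rw [le_div_iff₀ (by positivity)]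
    exact hn

lemma of_lowerDensity_pos (E : Set ℕ) (h : 0 < lowerDensity E) :
    ∃ c : ℝ, 0 < c ∧ ∀ᶠ n : ℕ in atTop, c * ((n : ℝ) + 1) ≤ cnt E n := by
  refine ⟨lowerDensity E / 2, by positivity, ?_⟩
  have h2 : lowerDensity E / 2 < lowerDensity E := by linarith
  have := eventually_lt_of_lt_liminf h2 (isBoundedUnder_of ⟨0, fun n => by
    exact div_nonneg (cnt_nonneg E n) (by positivity)⟩)
  filter_upwards [this] with n hn
  rw [lt_div_iff₀ (by positivity)] at hn
  exact hn.le

lemma frequently_of_lowerDensity_pos (E : Set ℕ) (h : 0 < lowerDensity E) (N : ℕ) :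
    ∃ n, N ≤ n ∧ n ∈ E := by
  by_contra hcon
  push Not at hcon
  obtain ⟨c, hc, hE⟩ := of_lowerDensity_pos E h
  have hb : ∀ n, cnt E n ≤ N := fun n => by
    have := cnt_le_card E n (Finset.range N) (by
      intro k _ hk
      by_contra h'
      simp at h'
      exact hcon k h' hk)
    simpa using this
  obtain ⟨M, hM⟩ := exists_nat_gt ((N : ℝ) / c)
  obtain ⟨n, hn, hn'⟩ := (hE.and (eventually_ge_atTop M)).exists
  rw [div_lt_iff₀ hc] at hM
  have : (M : ℝ) ≤ n := by exact_mod_cast hn'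
  nlinarith [hb n]

lemma countable_of_density {ι : Type*} (Λ : Set ι) (E : ι → Set ℕ)
    (hpos : ∀ l ∈ Λ, 0 < lowerDensity (E l))
    (hdisj : ∀ l ∈ Λ, ∀ m ∈ Λ, l ≠ m → ∃ N, ∀ n, N ≤ n → n ∈ E l → n ∉ E m) :
    Λ.Countable := by
  classical
  let F : ℕ → Set ι := fun q =>
    {l | l ∈ Λ ∧ ∀ᶠ n : ℕ in atTop, (1 / ((q : ℝ) + 1)) * ((n : ℝ) + 1) ≤ cnt (E l) n}
  have hcov : Λ ⊆ ⋃ q, F q := by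
    intro l hl
    obtain ⟨c, hc, hE⟩ := of_lowerDensity_pos _ (hpos l hl)
    obtain ⟨q, hq⟩ := exists_nat_one_div_lt hc
    refine Set.mem_iUnion.2 ⟨q, hl, ?_⟩
    filter_upwards [hE] with n hn
    refine le_trans ?_ hn
    gcongr
  refine Set.Countable.mono hcov (Set.countable_iUnion fun q => Set.Finite.countable ?_)
  by_contra hinf
  obtain ⟨S, hSF, hcard⟩ := Set.Infinite.exists_subset_card_eq (s := F q) hinf (q + 2)
  have hN : ∃ N, ∀ l ∈ S, ∀ m ∈ S, l ≠ m → ∀ n, N ≤ n → n ∈ E l → n ∉ E m := by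
    have : ∀ l m : ι, ∃ N, l ∈ S → m ∈ S → l ≠ m → ∀ n, N ≤ n → n ∈ E l → n ∉ E m := by
      intro l m
      by_cases h : l ∈ S ∧ m ∈ S ∧ l ≠ m
      · obtain ⟨N, hN⟩ := hdisj l (hSF h.1).1 m (hSF h.2.1).1 h.2.2
        exact ⟨N, fun _ _ _ => hN⟩
      · exact ⟨0, fun a b c => (h ⟨a, b, c⟩).elim⟩
    choose N hN using this
    refine ⟨(S ×ˢ S).sup (fun z => N z.1 z.2), fun l hl m hm hlm n hn => hN l m hl hm hlm n ?_⟩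
    refine le_trans ?_ hn
    exact Finset.le_sup (f := fun z : ι × ι => N z.1 z.2) (b := (l, m)) (by simp [hl, hm])
  obtain ⟨N, hN⟩ := hN
  have hall : ∀ᶠ n : ℕ in atTop, ∀ l ∈ S,
      (1 / ((q : ℝ) + 1)) * ((n : ℝ) + 1) ≤ cnt (E l) n := by
    rw [Filter.eventually_all_finset]
    exact fun l hl => (hSF hl).2
  have hup : ∀ n, ∑ l ∈ S, cnt (E l) n ≤ (q + 2 : ℝ) * N + (n + 1) := by
    intro n
    have h1 : ∑ l ∈ S, cnt (E l) n = ∑ k ∈ Finset.range (n + 1),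
        ∑ l ∈ S, Set.indicator (E l) (fun _ => (1 : ℝ)) k := by
      unfold cnt
      exact Finset.sum_comm
    have h2 : ∀ k, ∑ l ∈ S, Set.indicator (E l) (fun _ => (1 : ℝ)) k ≤
        (q + 2 : ℝ) * Set.indicator {k | k < N} (fun _ => (1 : ℝ)) k + 1 := by
      intro k
      by_cases hk : k < N
      · calc _ ≤ ∑ l ∈ S, (1 : ℝ) := Finset.sum_le_sum fun l _ => by
              rw [Set.indicator_apply]; split_ifs <;> norm_num
          _ = q + 2 := by simp [hcard]
          _ ≤ _ := by simp [hk]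
      · have h3 : ∑ l ∈ S, Set.indicator (E l) (fun _ => (1 : ℝ)) k
            = (S.filter (fun l => k ∈ E l)).card := by
          simp [Set.indicator_apply]
        have h4 : (S.filter (fun l => k ∈ E l)).card ≤ 1 := by
          rw [Finset.card_le_one]
          intro l hl m hm
          simp only [Finset.mem_filter] at hl hm
          by_contra hlm
          exact hN l hl.1 m hm.1 hlm k (by omega) hl.2 hm.2
        rw [h3]
        have h5 : ((S.filter (fun l => k ∈ E l)).card : ℝ) ≤ 1 := by exact_mod_cast h4
        simpa [hk] using h5
    rw [h1]
    refine (Finset.sum_le_sum fun k _ => h2 k).trans ?_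
    rw [Finset.sum_add_distrib, ← Finset.mul_sum]
    have h6 : cnt {k | k < N} n ≤ N := by
      simpa using cnt_le_card {k | k < N} n (Finset.range N) (by intro k _ hk; simpa using hk)
    unfold cnt at h6
    have h7 : (q + 2 : ℝ) * _ ≤ (q+2) * N := mul_le_mul_of_nonneg_left h6 (by positivity)
    simp only [Finset.sum_const, Finset.card_range, nsmul_eq_mul, mul_one]
    push_cast
    linarith
  obtain ⟨M, hM⟩ := exists_nat_gt ((q + 2 : ℝ) * N * (q + 1))
  obtain ⟨n, hn, hn'⟩ := (hall.and (eventually_ge_atTop M)).exists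
  have h8 := (Finset.sum_le_sum hn).trans (hup n)
  simp only [Finset.sum_const, hcard, nsmul_eq_mul] at h8
  have hMn : (M : ℝ) ≤ n := by exact_mod_cast hn'
  have h9 : ((q + 2 : ℕ) : ℝ) * (1 / ((q : ℝ) + 1) * ((n : ℝ) + 1)) = (n + 1) + (n + 1) / (q + 1) := by
    push_cast
    field_simp
    ring
  rw [h9] at h8
  have h10 : ((n : ℝ) + 1) / (q + 1) ≤ (q + 2 : ℝ) * N := by linarith
  rw [div_le_iff₀ (by positivity)] at h10
  linarith
section partTwo

variable {X : Type*} [NormedAddCommGroup X] [NormedSpace ℂ X]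

lemma smul_pow_apply_norm (B : X →L[ℂ] X) (l : ℝ) (hl : 0 < l) (n : ℕ) (x : X) :
    ‖(((l : ℂ) • B) ^ n) x‖ = l ^ n * ‖(B ^ n) x‖ := by
  rw [smul_pow, _root_.smul_apply, norm_smul, norm_pow, Complex.norm_real,
    Real.norm_of_nonneg hl.le]

lemma key_two (B : X →L[ℂ] X) (C ρ : ℝ)
    (hC : ∀ k : ℕ, ‖B ^ k‖ ≤ C * ρ ^ k) (l m : ℝ) (hl : 0 < l) (hm : 0 < m)
    (x : X) (n k : ℕ) (h1 : ‖(((l : ℂ) • B) ^ n) x‖ < 1)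
    (h2 : 1 < ‖(((m : ℂ) • B) ^ (n + k)) x‖) :
    (l / m) ^ n ≤ C * (ρ * m) ^ k := by
  rw [smul_pow_apply_norm B l hl] at h1
  rw [smul_pow_apply_norm B m hm] at h2
  have h3 : ‖(B ^ (n + k)) x‖ ≤ C * ρ ^ k * ‖(B ^ n) x‖ := by
    rw [add_comm, pow_add, _root_.mul_apply_eq_comp]
    exact (ContinuousLinearMap.le_opNorm _ _).trans
      (mul_le_mul_of_nonneg_right (hC k) (norm_nonneg _))
  have hC0 : 0 ≤ C * ρ ^ k := (norm_nonneg _).trans (hC k)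
  have h4 : ‖(B ^ n) x‖ ≤ 1 / l ^ n := by
    rw [le_div_iff₀ (by positivity)]; linarith
  have h5 : 1 ≤ m ^ (n + k) * (C * ρ ^ k * (1 / l ^ n)) := by
    refine h2.le.trans ?_
    gcongr
    refine h3.trans ?_
    gcongr
  rw [div_pow, mul_pow, div_le_iff₀ (by positivity)]
  have : m ^ (n + k) * (C * ρ ^ k * (1 / l ^ n)) = (C * (ρ ^ k * m ^ k) * m ^ n) / l ^ n := by
    rw [pow_add]; ring
  rw [this, one_le_div (by positivity)] at h5
  exact h5

lemma exists_norm_between [Nontrivial X] : ∃ y : X, 1 < ‖y‖ ∧ ‖y‖ < 2 := by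
  obtain ⟨y, hy⟩ := exists_ne (0 : X)
  have : ‖y‖ ≠ 0 := norm_ne_zero_iff.2 hy
  refine ⟨(((3 / 2 : ℝ) / ‖y‖ : ℝ) : ℂ) • y, ?_⟩
  rw [norm_smul, Complex.norm_real, Real.norm_of_nonneg (by positivity), div_mul_cancel₀ _ this]
  norm_num

lemma dens_lt_one (B : X →L[ℂ] X) (l : ℝ) (x : X) (hx : x ∈ FHC ((l : ℂ) • B)) :
    0 < lowerDensity {n : ℕ | ‖(((l : ℂ) • B) ^ n) x‖ < 1} := by
  have := hx (Metric.ball 0 1) Metric.isOpen_ball ⟨0, by simp⟩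
  simpa using this

lemma dens_gt_one [Nontrivial X] (B : X →L[ℂ] X) (l : ℝ) (x : X) (hx : x ∈ FHC ((l : ℂ) • B)) :
    0 < lowerDensity {n : ℕ | 1 < ‖(((l : ℂ) • B) ^ n) x‖} := by
  obtain ⟨y, hy⟩ := exists_norm_between (X := X)
  exact hx {y | 1 < ‖y‖} (isOpen_lt continuous_const continuous_norm) ⟨y, hy.1⟩

lemma dens_between [Nontrivial X] (B : X →L[ℂ] X) (l : ℝ) (x : X)
    (hx : x ∈ FHC ((l : ℂ) • B)) :
    0 < lowerDensity {n : ℕ | 1 < ‖(((l : ℂ) • B) ^ n) x‖ ∧ ‖(((l : ℂ) • B) ^ n) x‖ < 2} := by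
  obtain ⟨y, hy⟩ := exists_norm_between (X := X)
  exact hx {y | 1 < ‖y‖ ∧ ‖y‖ < 2} ((isOpen_lt continuous_const continuous_norm).inter
    (isOpen_lt continuous_norm continuous_const)) ⟨y, hy⟩

lemma between_disj (B : X →L[ℂ] X) (x : X) (l m : ℝ) (hl : 0 < l) (hlm : l < m) :
    ∃ N : ℕ, ∀ n, N ≤ n →
      1 < ‖(((l : ℂ) • B) ^ n) x‖ → ‖(((m : ℂ) • B) ^ n) x‖ < 2 → False := by
  have h1 : 1 < m / l := by rwa [one_lt_div hl]
  obtain ⟨N, hN⟩ := pow_unbounded_of_one_lt 2 h1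
  refine ⟨N, fun n hn ha hb => ?_⟩
  rw [smul_pow_apply_norm B l hl] at ha
  rw [smul_pow_apply_norm B m (hl.trans hlm)] at hb
  have h2 : 2 < (m / l) ^ n := hN.trans_le (pow_le_pow_right₀ h1.le hn)
  have h3 : m ^ n * ‖(B ^ n) x‖ = (m / l) ^ n * (l ^ n * ‖(B ^ n) x‖) := by
    rw [div_pow]; field_simp
  rw [h3] at hb
  nlinarith

lemma countable_of_common [Nontrivial X] (B : X →L[ℂ] X) (Λ : Set ℝ)
    (hΛpos : Λ ⊆ Set.Ioi (0 : ℝ)) (x : X) (hx : ∀ l ∈ Λ, x ∈ FHC ((l : ℂ) • B)) :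
    Λ.Countable := by
  refine countable_of_density Λ _ (fun l hl => dens_between B l x (hx l hl)) ?_
  intro l hl m hm hlm
  rcases lt_or_gt_of_ne hlm with h | h
  · obtain ⟨N, hN⟩ := between_disj B x l m (hΛpos hl) h
    exact ⟨N, fun n hn h1 h2 => hN n hn h1.1 h2.2⟩
  · obtain ⟨N, hN⟩ := between_disj B x m l (hΛpos hm) h
    exact ⟨N, fun n hn h1 h2 => hN n hn h2.1 h1.2⟩

lemma bddAbove_of_common [Nontrivial X] (B : X →L[ℂ] X) (Λ : Set ℝ)
    (hΛpos : Λ ⊆ Set.Ioi (0 : ℝ)) (hne : Λ.Nonempty)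
    (x : X) (hx : ∀ l ∈ Λ, x ∈ FHC ((l : ℂ) • B)) : BddAbove Λ := by
  by_contra hunb
  obtain ⟨m, hm⟩ := hne
  have hm0 : 0 < m := hΛpos hm
  obtain ⟨c, hc, hE⟩ := of_lowerDensity_pos _ (dens_gt_one B m x (hx m hm))
  obtain ⟨K, hK⟩ := exists_nat_gt (1 / c)
  set ρ : ℝ := ‖B‖ with hρ
  set σ : ℝ := max 1 (ρ * m) with hσ
  have hσ1 : 1 ≤ σ := le_max_left _ _
  obtain ⟨l, hl, hlbig⟩ := not_bddAbove_iff.1 hunb (m * (2 * σ ^ K))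
  have hl0 : 0 < l := hΛpos hl
  have hCC : ∀ k : ℕ, ‖B ^ k‖ ≤ (max 1 ‖(1 : X →L[ℂ] X)‖) * ρ ^ k := by
    intro k
    rcases Nat.eq_zero_or_pos k with rfl | hk
    · simp
    · refine (norm_pow_le' B hk).trans ?_
      exact le_mul_of_one_le_left (by positivity) (le_max_left _ _)
  set C : ℝ := max 1 ‖(1 : X →L[ℂ] X)‖
  obtain ⟨N0, hN0⟩ := pow_unbounded_of_one_lt C (one_lt_two : (1 : ℝ) < 2)
  rw [eventually_atTop] at hE
  obtain ⟨N1, hN1⟩ := hE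
  obtain ⟨n, hn, hnF⟩ := frequently_of_lowerDensity_pos _ (dens_lt_one B l x (hx l hl))
    (max N0 N1)
  have hcount := hN1 ((K + 1) * n) (by nlinarith [le_max_right N0 N1])
  have hup := cnt_le_card {n : ℕ | 1 < ‖(((m : ℂ) • B) ^ n) x‖} ((K + 1) * n) (Finset.range n) (by
    intro N hN hNE
    rw [Finset.mem_range]
    by_contra hlt
    push Not at hlt
    obtain ⟨k, rfl⟩ := Nat.exists_eq_add_of_le hlt
    have hk : k ≤ K * n := by nlinarith
    have h1 := key_two B C ρ hCC l m hl0 hm0 x n k hnF hNE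
    have h2 : C * (ρ * m) ^ k ≤ C * (σ ^ K) ^ n := by
      gcongr
      calc (ρ * m) ^ k ≤ σ ^ k := by gcongr; exact le_max_right _ _
        _ ≤ σ ^ (K * n) := pow_le_pow_right₀ hσ1 hk
        _ = _ := pow_mul _ _ _
    have h3 : (2 * σ ^ K) ^ n ≤ (l / m) ^ n := by
      gcongr
      rw [le_div_iff₀ hm0]; linarith
    rw [mul_pow] at h3
    have h4 : C < 2 ^ n := hN0.trans_le
      (pow_le_pow_right₀ one_le_two ((le_max_left _ _).trans hn))
    have h5 : 0 < (σ ^ K) ^ n := by positivity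
    nlinarith)
  simp only [Finset.card_range] at hup
  have h6 := hcount.trans hup
  push_cast at h6
  rw [div_lt_iff₀ hc] at hK
  have : (0 : ℝ) ≤ n := by positivity
  nlinarith

lemma inf_of_common [Nontrivial X] [CompleteSpace X] (B : X →L[ℂ] X) (Λ : Set ℝ)
    (hΛpos : Λ ⊆ Set.Ioi (0 : ℝ)) (h2 : ∃ a ∈ Λ, ∃ b ∈ Λ, a ≠ b)
    (x : X) (hx : ∀ l ∈ Λ, x ∈ FHC ((l : ℂ) • B)) :
    (spectralRadius ℂ B)⁻¹ < ENNReal.ofReal (sInf Λ) := by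
  by_contra hcon
  push Not at hcon
  obtain ⟨m0, hm0, l, hl, hml⟩ : ∃ a ∈ Λ, ∃ b ∈ Λ, a < b := by
    obtain ⟨a, ha, b, hb, hab⟩ := h2
    rcases lt_or_gt_of_ne hab with h | h
    · exact ⟨a, ha, b, hb, h⟩
    · exact ⟨b, hb, a, ha, h⟩
  have hm0p : 0 < m0 := hΛpos hm0
  have hl0 : 0 < l := hΛpos hl
  have hinf0 : 0 ≤ sInf Λ := Real.sInf_nonneg fun y hy => (hΛpos hy).le
  have hrtop : spectralRadius ℂ B ≠ ⊤ :=
    ((spectrum.spectralRadius_le_nnnorm (𝕜 := ℂ) B).trans_lt ENNReal.coe_lt_top).ne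
  obtain ⟨r, hr⟩ : ∃ r : ℝ≥0, spectralRadius ℂ B = r := ⟨_, (ENNReal.coe_toNNReal hrtop).symm⟩
  have hmr : sInf Λ * r ≤ 1 := by
    rw [hr] at hcon
    have h3 : ENNReal.ofReal (sInf Λ) * r ≤ 1 :=
      (mul_le_mul_left hcon _).trans (ENNReal.inv_mul_le_one _)
    rw [← ENNReal.ofReal_coe_nnreal, ← ENNReal.ofReal_mul hinf0, ENNReal.ofReal_le_one] at h3
    exact h3
  obtain ⟨c, hc, hE⟩ := of_lowerDensity_pos _ (dens_lt_one B l x (hx l hl))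
  obtain ⟨K, hK⟩ := exists_nat_gt (1 / c)
  set q : ℝ := l / m0 with hq
  have hq1 : 1 < q := by rwa [hq, one_lt_div hm0p]
  obtain ⟨σ, hσ1, hσK⟩ : ∃ σ : ℝ, 1 < σ ∧ σ ^ K < q := by
    have : ∀ᶠ s : ℝ in 𝓝[>] 1, s ^ K < q := by
      have hcont : Tendsto (fun s : ℝ => s ^ K) (𝓝[>] 1) (𝓝 (1 ^ K)) :=
        ((continuous_pow K).tendsto 1).mono_left nhdsWithin_le_nhds
      exact hcont.eventually (gt_mem_nhds (by simpa using hq1))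
    obtain ⟨s, hs1, hs2⟩ := (this.and self_mem_nhdsWithin).exists
    exact ⟨s, hs2, hs1⟩
  obtain ⟨δ, hδ0, hδ⟩ : ∃ δ : ℝ, 0 < δ ∧ (sInf Λ + δ) * (r + δ) < σ := by
    have : ∀ᶠ s : ℝ in 𝓝[>] 0, (sInf Λ + s) * (r + s) < σ := by
      have hcont : Tendsto (fun s : ℝ => (sInf Λ + s) * (r + s)) (𝓝[>] 0)
          (𝓝 ((sInf Λ + 0) * (r + 0))) :=
        (Continuous.tendsto (by fun_prop) 0).mono_left nhdsWithin_le_nhds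
      exact hcont.eventually (gt_mem_nhds (by simp; linarith))
    obtain ⟨s, hs1, hs2⟩ := (this.and self_mem_nhdsWithin).exists
    exact ⟨s, hs2, hs1⟩
  obtain ⟨m1, hm1, hm1lt⟩ := exists_lt_of_csInf_lt ⟨l, hl⟩ (show sInf Λ < sInf Λ + δ by linarith)
  obtain ⟨m, hm, hmm0, hmlt⟩ : ∃ m ∈ Λ, m ≤ m0 ∧ m < sInf Λ + δ := by
    rcases le_total m0 m1 with h | h
    · exact ⟨m0, hm0, le_rfl, by linarith⟩
    · exact ⟨m1, hm1, h, hm1lt⟩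
  have hmp : 0 < m := hΛpos hm
  set ρ : ℝ := r + δ with hρ
  have hρ0 : 0 < ρ := by positivity
  obtain ⟨C, hCC⟩ : ∃ C : ℝ, ∀ k : ℕ, ‖B ^ k‖ ≤ C * ρ ^ k := by
    have ht := spectrum.pow_nnnorm_pow_one_div_tendsto_nhds_spectralRadius B
    rw [hr] at ht
    have hlt : (r : ℝ≥0∞) < ENNReal.ofReal ρ := by
      rw [← ENNReal.ofReal_coe_nnreal, ENNReal.ofReal_lt_ofReal_iff hρ0]; linarith
    have hev := ht.eventually (gt_mem_nhds hlt)
    rw [eventually_atTop] at hev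
    obtain ⟨k0, hk0⟩ := hev
    refine ⟨1 + ∑ k ∈ Finset.range (k0 + 1), ‖B ^ k‖ / ρ ^ k, fun k => ?_⟩
    have hsum : 0 ≤ ∑ k ∈ Finset.range (k0 + 1), ‖B ^ k‖ / ρ ^ k :=
      Finset.sum_nonneg fun _ _ => by positivity
    by_cases hk : k < k0 + 1
    · have h3 : ‖B ^ k‖ / ρ ^ k ≤ ∑ k ∈ Finset.range (k0 + 1), ‖B ^ k‖ / ρ ^ k :=
        Finset.single_le_sum (f := fun k => ‖B ^ k‖ / ρ ^ k) (fun _ _ => by positivity)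
          (Finset.mem_range.2 hk)
      rw [← div_le_iff₀ (by positivity)]
      linarith
    · have h3 := hk0 k (by omega)
      have hkpos : (0 : ℝ) < k := by
        have : 0 < k := by omega
        exact_mod_cast this
      have h4 : ((‖B ^ k‖₊ : ℝ≥0∞) ^ (1 / (k : ℝ))) ^ (k : ℝ) ≤ (ENNReal.ofReal ρ) ^ (k : ℝ) :=
        ENNReal.rpow_le_rpow h3.le hkpos.le
      rw [← ENNReal.rpow_mul, one_div_mul_cancel hkpos.ne', ENNReal.rpow_one,
        ENNReal.rpow_natCast, ← ENNReal.ofReal_pow hρ0.le] at h4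
      have h5 : ‖B ^ k‖ ≤ ρ ^ k := by
        rw [← ENNReal.ofReal_coe_nnreal, ENNReal.ofReal_le_ofReal_iff (by positivity)] at h4
        exact h4
      have : 0 ≤ ρ ^ k := by positivity
      nlinarith
  have hC0 : 0 ≤ C := by
    have := (norm_nonneg _).trans (hCC 0)
    simpa using this
  have hρm : ρ * m ≤ σ := by
    have : ρ * m ≤ (sInf Λ + δ) * ρ := by nlinarith
    linarith
  have hqσ : 1 < q / σ ^ K := by rwa [one_lt_div (by positivity)]
  obtain ⟨N0, hN0⟩ := pow_unbounded_of_one_lt C hqσ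
  -- elements of F in [0, N] for N in E
  rw [eventually_atTop] at hE
  obtain ⟨N1, hN1⟩ := hE
  rw [div_lt_iff₀ hc] at hK
  obtain ⟨N2, hN2⟩ := exists_nat_gt (((K : ℝ) + 1) * (N0 + 1) / (K * c + c - 1))
  obtain ⟨N, hN, hNE⟩ := frequently_of_lowerDensity_pos _ (dens_gt_one B m x (hx m hm))
    (max N1 N2)
  have hcount := hN1 N ((le_max_left _ _).trans hN)
  have hup := cnt_le_card {n : ℕ | ‖(((l : ℂ) • B) ^ n) x‖ < 1} N
    (Finset.range (N0 + (N / (K + 1) + 1))) (by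
    intro n hnN hnF
    rw [Finset.mem_range]
    by_contra hlt
    push Not at hlt
    obtain ⟨k, rfl⟩ := Nat.exists_eq_add_of_le hnN
    have hnge : N0 ≤ n := le_trans (Nat.le_add_right _ _) hlt
    have hk : k ≤ K * n := by
      have h7 : (n + k) / (K + 1) < n := by omega
      rw [Nat.div_lt_iff_lt_mul (by omega)] at h7
      nlinarith
    have h1 := key_two B C ρ hCC l m hl0 hmp x n k hnF hNE
    have h2 : C * (ρ * m) ^ k ≤ C * (σ ^ K) ^ n := by
      gcongr
      calc (ρ * m) ^ k ≤ σ ^ k := by gcongr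
        _ ≤ σ ^ (K * n) := pow_le_pow_right₀ hσ1.le hk
        _ = _ := pow_mul _ _ _
    have h3 : q ^ n ≤ (l / m) ^ n := by
      rw [hq]
      gcongr
    have h4 : C < (q / σ ^ K) ^ n := hN0.trans_le
      (pow_le_pow_right₀ hqσ.le hnge)
    rw [div_pow, lt_div_iff₀ (by positivity)] at h4
    linarith)
  simp only [Finset.card_range] at hup
  have h6 := hcount.trans hup
  push_cast at h6
  have h7 : ((N / (K + 1) : ℕ) : ℝ) ≤ (N : ℝ) / (K + 1) := by
    have := Nat.cast_div_le (α := ℝ) (m := N) (n := K + 1)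
    push_cast at this
    exact this
  have h8 : (N2 : ℝ) ≤ N := by exact_mod_cast (le_max_right _ _).trans hN
  rw [div_lt_iff₀ (by linarith)] at hN2
  have h9 : c * ((N : ℝ) + 1) ≤ N0 + (N / (K + 1) + 1) := by linarith
  have h10 : (N : ℝ) / (K + 1) * (K + 1) = N := by field_simp
  have h11 : c * ((N : ℝ) + 1) * (K + 1) ≤ (N0 + (N / (K + 1) + 1)) * (K + 1) := by gcongr
  have h12 : (N2 : ℝ) * (K * c + c - 1) ≤ N * (K * c + c - 1) := by
    gcongr
    linarith
  nlinarith

end partTwo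
lemma exists_gap_map {ι : Type*} [Countable ι] [Nonempty ι] :
    ∃ J : ℕ → ι, ∀ j, ∃ P : ℕ, ∀ s, ∃ s', s ≤ s' ∧ s' ≤ s + P ∧ J s' = j := by
  obtain ⟨e, he⟩ := exists_surjective_nat ι
  refine ⟨fun s => e (padicValNat 2 s), fun j => ?_⟩
  obtain ⟨i, rfl⟩ := he j
  refine ⟨2 ^ (i + 2), fun s => ⟨2 ^ i * (2 * (s / 2 ^ (i + 1) + 1) + 1), ?_, ?_, ?_⟩⟩
  · have h1 := Nat.div_add_mod s (2 ^ (i + 1))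
    have h2 := Nat.mod_lt s (show 0 < 2 ^ (i + 1) by positivity)
    have h3 : 2 ^ (i + 1) = 2 * 2 ^ i := by ring
    generalize s / 2 ^ (i + 1) = d at *
    generalize 2 ^ (i + 1) = A at *
    subst h3
    nlinarith
  · have h1 := Nat.div_mul_le_self s (2 ^ (i + 1))
    have h3 : 2 ^ (i + 1) = 2 * 2 ^ i := by ring
    have h4 : 2 ^ (i + 2) = 4 * 2 ^ i := by ring
    rw [h4]
    generalize s / 2 ^ (i + 1) = d at *
    rw [h3] at h1
    nlinarith [pow_pos (show 0 < 2 by norm_num) i]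
  · have : padicValNat 2 (2 ^ i * (2 * (s / 2 ^ (i + 1) + 1) + 1)) = i := by
      rw [padicValNat.mul (by positivity) (by omega), padicValNat.prime_pow,
        padicValNat.eq_zero_of_not_dvd (by omega)]
      rfl
    simp only [this]

lemma good_density {ι : Type*} (J : ℕ → ι) (j : ι) (P : ℕ)
    (hP : ∀ s, ∃ s', s ≤ s' ∧ s' ≤ s + P ∧ J s' = j) (Q L n0 : ℕ) (hQ : 4 ≤ Q) (hL : 1 ≤ L)
    (E : Set ℕ) (hE : ∀ n, n0 ≤ n → J (Nat.log Q n) = j → L ∣ n → n ≤ 2 * Q ^ (Nat.log Q n) →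
      n ∈ E) : 0 < lowerDensity E := by
  have hQ0 : (0 : ℝ) < Q := by
    have : 0 < Q := by omega
    exact_mod_cast this
  have hL0 : (0 : ℝ) < L := by exact_mod_cast hL
  refine lowerDensity_pos_of E (1 / (2 * L * Q ^ (P + 2))) (by positivity) ?_
  filter_upwards [eventually_ge_atTop (Q ^ (P + 1 + (L + n0)))] with n hn
  have hn0 : n ≠ 0 := by
    have : 0 < Q ^ (P + 1 + (L + n0)) := by positivity
    omega
  set t := Nat.log Q n with ht
  have ht1 : Q ^ t ≤ n := Nat.pow_log_le_self Q hn0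
  have ht2 : n < Q ^ (t + 1) := Nat.lt_pow_succ_log_self (by omega) n
  have ht3 : P + 1 + (L + n0) ≤ t := Nat.le_log_of_pow_le (by omega) hn
  obtain ⟨s, hs1, hs2, hsj⟩ := hP (t - 1 - P)
  have hst : s + 1 ≤ t := by omega
  have hsL : L + n0 ≤ s := by omega
  have hsQ : s < Q ^ s := Nat.lt_pow_self (by omega)
  have hQs : 4 * Q ^ s ≤ Q ^ (s + 1) := by rw [pow_succ]; nlinarith [Nat.zero_le (Q ^ s)]
  have hQt : Q ^ (s + 1) ≤ Q ^ t := Nat.pow_le_pow_right (by omega) hst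
  have hcard := card_le_cnt E n
    ((Finset.Ioc (Q ^ s / L) (2 * Q ^ s / L)).image (fun i => L * i)) (by
    intro k hk
    simp only [Finset.mem_image, Finset.mem_Ioc] at hk
    obtain ⟨i, ⟨hi1, hi2⟩, rfl⟩ := hk
    have h1 : Q ^ s < L * i := by
      rw [Nat.div_lt_iff_lt_mul hL] at hi1
      linarith
    have h2 : L * i ≤ 2 * Q ^ s := by
      rw [Nat.le_div_iff_mul_le hL] at hi2
      linarith
    have h3 : Nat.log Q (L * i) = s :=
      Nat.log_eq_of_pow_le_of_lt_pow h1.le (by omega)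
    refine ⟨by omega, hE _ (by omega) (by rw [h3]; exact hsj) (dvd_mul_right _ _) ?_⟩
    rw [h3]; exact h2)
  rw [Finset.card_image_of_injective _ (fun a b h => Nat.eq_of_mul_eq_mul_left hL h),
    Nat.card_Ioc] at hcard
  have hc1 : Q ^ s / L ≤ 2 * Q ^ s / L - Q ^ s / L := by
    have : 2 * (Q ^ s / L) ≤ 2 * Q ^ s / L := Nat.mul_div_le_mul_div_assoc 2 (Q ^ s) L
    omega
  have hc2 : Q ^ s ≤ 2 * L * (Q ^ s / L) := by
    have h1 := Nat.div_add_mod (Q ^ s) L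
    have h2 := Nat.mod_lt (Q ^ s) hL
    have h3 : 1 ≤ Q ^ s / L := by
      rw [Nat.le_div_iff_mul_le hL]; omega
    nlinarith
  have hc3 : n + 1 ≤ Q ^ s * Q ^ (P + 2) := by
    rw [← pow_add]
    exact ht2.trans_le (Nat.pow_le_pow_right (by omega) (by omega))
  have hc4 : ((Q ^ s / L : ℕ) : ℝ) ≤ cnt E n := le_trans (by exact_mod_cast hc1) hcard
  refine le_trans ?_ hc4
  rw [one_div_mul_eq_div, div_le_iff₀ (by positivity)]
  have hc5 : n + 1 ≤ (Q ^ s / L) * (2 * L * Q ^ (P + 2)) := by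
    refine hc3.trans ?_
    calc Q ^ s * Q ^ (P + 2) ≤ (2 * L * (Q ^ s / L)) * Q ^ (P + 2) := by gcongr
      _ = _ := by ring
  exact_mod_cast hc5

section partOne

variable {p : ℝ≥0∞} [Fact (1 ≤ p)]

lemma exists_dense_finsupp (hp : p ≠ ⊤) : ∃ D : Set (lp (fun _ : ℕ => ℂ) p),
    D.Countable ∧ Dense D ∧ ∀ v ∈ D, ∃ m : ℕ, ∀ k, m ≤ k → v k = 0 := by
  set S : Submodule ℂ (lp (fun _ : ℕ => ℂ) p) :=
    Submodule.span ℂ (Set.range fun i : ℕ => lp.single p i (1 : ℂ)) with hS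
  have hsep : TopologicalSpace.IsSeparable (S : Set (lp (fun _ : ℕ => ℂ) p)) :=
    (Set.countable_range _).isSeparable.span
  have hfin : ∀ v ∈ S, ∃ m : ℕ, ∀ k, m ≤ k → v k = 0 := by
    intro v hv
    induction hv using Submodule.span_induction with
    | mem x hx =>
      obtain ⟨i, rfl⟩ := hx
      refine ⟨i + 1, fun k hk => ?_⟩
      simp only [lp.single_apply]
      rw [Pi.single_eq_of_ne]
      omega
    | zero => exact ⟨0, fun k _ => rfl⟩
    | add x y _ _ hx hy =>
      obtain ⟨m, hm⟩ := hx
      obtain ⟨m', hm'⟩ := hy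
      refine ⟨max m m', fun k hk => ?_⟩
      rw [lp.coeFn_add, Pi.add_apply, hm k (le_trans (le_max_left _ _) hk),
        hm' k (le_trans (le_max_right _ _) hk), add_zero]
    | smul c x _ hx =>
      obtain ⟨m, hm⟩ := hx
      refine ⟨m, fun k hk => ?_⟩
      rw [lp.coeFn_smul, Pi.smul_apply, hm k hk, smul_zero]
  obtain ⟨D, hDS, hDc, hD⟩ := hsep.exists_countable_dense_subset
  refine ⟨D, hDc, ?_, fun v hv => hfin v (hDS hv)⟩
  have hSd : Dense (S : Set (lp (fun _ : ℕ => ℂ) p)) := by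
    intro f
    refine mem_closure_of_tendsto (lp.hasSum_single hp f) (Eventually.of_forall fun s => ?_)
    refine Submodule.sum_mem _ fun i _ => ?_
    have : lp.single p i (f i) = (f i) • (lp.single p i (1 : ℂ) : lp (fun _ : ℕ => ℂ) p) := by
      rw [← lp.single_smul]; simp
    rw [this]
    exact Submodule.smul_mem _ _ (Submodule.subset_span ⟨i, rfl⟩)
  exact hSd.mono hD |>.of_closure

/-- Products of weights. -/
noncomputable def Wt (w : ℕ → ℂ) (n : ℕ) : ℂ := ∏ k ∈ Finset.Icc 1 n, w k

lemma Wt_succ (w : ℕ → ℂ) (n : ℕ) : Wt w (n + 1) = Wt w n * w (n + 1) := by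
  unfold Wt
  rw [Finset.prod_Icc_succ_top (by omega)]

lemma Wt_ne_zero (w : ℕ → ℂ) (hw0 : ∀ n : ℕ, 1 ≤ n → w n ≠ 0) (n : ℕ) : Wt w n ≠ 0 := by
  unfold Wt
  rw [Finset.prod_ne_zero_iff]
  intro k hk
  exact hw0 k (Finset.mem_Icc.1 hk).1

lemma shift_pow (w : ℕ → ℂ)
    (B : lp (fun _ : ℕ => ℂ) p →L[ℂ] lp (fun _ : ℕ => ℂ) p)
    (hB : ∀ x : lp (fun _ : ℕ => ℂ) p, ∀ n : ℕ, (B x) n = w (n + 1) * x (n + 1))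
    (x : lp (fun _ : ℕ => ℂ) p) (n : ℕ) : ∀ k : ℕ,
    Wt w k * ((B ^ n) x) k = Wt w (n + k) * x (n + k) := by
  induction n with
  | zero => intro k; simp
  | succ n ih =>
    intro k
    rw [pow_succ', _root_.mul_apply_eq_comp, hB, ← mul_assoc, ← Wt_succ, ih (k + 1)]
    rw [show n + (k + 1) = n + 1 + k by ring]

lemma weight_bound (w : ℕ → ℂ) (hw0 : ∀ n : ℕ, 1 ≤ n → w n ≠ 0) (a : ℝ)
    (ha : rpwInv w < ENNReal.ofReal a) :
    ∃ C ρ : ℝ, 0 < C ∧ 0 < ρ ∧ ρ < a ∧ ∀ n, ‖Wt w n‖⁻¹ ≤ C * ρ ^ n := by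
  have ha0 : 0 < a := by
    rw [← ENNReal.ofReal_pos]; exact lt_of_le_of_lt zero_le ha
  obtain ⟨ρ, hρ1, hρ2⟩ := ENNReal.lt_iff_exists_nnreal_btwn.1 ha
  have hρa : (ρ : ℝ) < a := by
    rw [← ENNReal.ofReal_coe_nnreal, ENNReal.ofReal_lt_ofReal_iff ha0] at hρ2
    exact hρ2
  have hρ0 : (0 : ℝ) < ρ := by
    have := lt_of_le_of_lt zero_le hρ1
    exact_mod_cast this
  have hev := eventually_lt_of_limsup_lt hρ1
  rw [eventually_atTop] at hev
  obtain ⟨k0, hk0⟩ := hev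
  refine ⟨1 + ∑ k ∈ Finset.range (k0 + 1), ‖Wt w k‖⁻¹ / (ρ : ℝ) ^ k, ρ, ?_, hρ0, hρa,
    fun k => ?_⟩
  · have : 0 ≤ ∑ k ∈ Finset.range (k0 + 1), ‖Wt w k‖⁻¹ / (ρ : ℝ) ^ k :=
      Finset.sum_nonneg fun _ _ => by positivity
    linarith
  have hsum : 0 ≤ ∑ k ∈ Finset.range (k0 + 1), ‖Wt w k‖⁻¹ / (ρ : ℝ) ^ k :=
      Finset.sum_nonneg fun _ _ => by positivity
  by_cases hk : k < k0 + 1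
  · have h3 : ‖Wt w k‖⁻¹ / (ρ : ℝ) ^ k ≤ ∑ k ∈ Finset.range (k0 + 1), ‖Wt w k‖⁻¹ / (ρ : ℝ) ^ k :=
      Finset.single_le_sum (f := fun k => ‖Wt w k‖⁻¹ / (ρ : ℝ) ^ k) (fun _ _ => by positivity)
        (Finset.mem_range.2 hk)
    rw [← div_le_iff₀ (by positivity)]
    linarith
  · have h3 := hk0 k (by omega)
    have hkpos : (0 : ℝ) < k := by
      have : 0 < k := by omega
      exact_mod_cast this
    have hprod : (∏ i ∈ Finset.Icc 1 k, (‖w i‖₊ : ℝ≥0∞))⁻¹ = ((‖Wt w k‖₊⁻¹ : ℝ≥0) : ℝ≥0∞) := by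
      rw [ENNReal.coe_inv (by simpa using Wt_ne_zero w hw0 k), Wt, nnnorm_prod]
      push_cast
      rfl
    rw [hprod] at h3
    have h4 : (((‖Wt w k‖₊⁻¹ : ℝ≥0) : ℝ≥0∞) ^ (1 / (k : ℝ))) ^ (k : ℝ) ≤ (ρ : ℝ≥0∞) ^ (k : ℝ) :=
      ENNReal.rpow_le_rpow h3.le hkpos.le
    rw [← ENNReal.rpow_mul, one_div_mul_cancel hkpos.ne', ENNReal.rpow_one,
      ENNReal.rpow_natCast] at h4
    have h5 : ‖Wt w k‖⁻¹ ≤ (ρ : ℝ) ^ k := by exact_mod_cast h4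
    have : 0 ≤ (ρ : ℝ) ^ k := by positivity
    nlinarith

lemma norm_le_of_coord (hp : p ≠ ⊤) (f : lp (fun _ : ℕ => ℂ) p) (g : ℕ → ℝ) (b : ℝ)
    (hg : HasSum g b) (h : ∀ k, ‖f k‖ ≤ g k) : ‖f‖ ≤ b := by
  refine (lp.hasSum_single hp f).norm_le_of_bounded hg fun i => ?_
  rw [lp.norm_single (lt_of_lt_of_le one_pos Fact.out)]
  exact h i

lemma common_exists (hp : p ≠ ⊤) (w : ℕ → ℂ) (hw0 : ∀ n : ℕ, 1 ≤ n → w n ≠ 0)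
    (B : lp (fun _ : ℕ => ℂ) p →L[ℂ] lp (fun _ : ℕ => ℂ) p)
    (hB : ∀ x : lp (fun _ : ℕ => ℂ) p, ∀ n : ℕ, (B x) n = w (n + 1) * x (n + 1))
    (C ρ a b : ℝ) (hC : 0 < C) (hρ : 0 < ρ) (hρa : ρ < a)
    (hW : ∀ n, ‖Wt w n‖⁻¹ ≤ C * ρ ^ n)
    {ι : Type*} [Countable ι] [Nonempty ι] (lam : ι → ℝ) (hlam : ∀ j, a ≤ lam j ∧ lam j ≤ b)
    (v : ι → lp (fun _ : ℕ => ℂ) p) (hv : ∀ j, ∃ m : ℕ, ∀ k, m ≤ k → v j k = 0)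
    (ε : ι → ℝ) (hε : ∀ j, 0 < ε j) :
    ∃ x : lp (fun _ : ℕ => ℂ) p, ∀ j,
      0 < lowerDensity {n : ℕ | ‖((((lam j : ℝ) : ℂ) • B) ^ n) x - v j‖ < ε j} := by
  classical
  have ha : 0 < a := hρ.trans hρa
  have hlam0 : ∀ j, 0 < lam j := fun j => ha.trans_le (hlam j).1
  have hWne := Wt_ne_zero w hw0
  set θ : ℝ := ρ / a with hθ
  have hθ0 : 0 < θ := by positivity
  have hθ1 : θ < 1 := by rwa [hθ, div_lt_one ha]
  set η : ℝ := √θ with hη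
  have hη0 : 0 < η := Real.sqrt_pos.2 hθ0
  have hηsq : η ^ 2 = θ := Real.sq_sqrt hθ0.le
  have hη1 : η < 1 := by nlinarith
  obtain ⟨N, hN⟩ : ∃ N : ℕ, b / ρ * θ ^ N ≤ 1 := by
    obtain ⟨N, hN⟩ := pow_unbounded_of_one_lt (b / ρ) (one_lt_inv_iff₀.2 ⟨hθ0, hθ1⟩)
    refine ⟨N, ?_⟩
    rw [inv_pow] at hN
    have h1 : 0 < θ ^ N := by positivity
    calc b / ρ * θ ^ N ≤ (θ ^ N)⁻¹ * θ ^ N := by gcongr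
      _ = 1 := inv_mul_cancel₀ h1.ne'
  -- the base of the blocks
  set Q : ℕ := 4 * (N + 1) with hQ
  have hQ4 : 4 ≤ Q := by omega
  obtain ⟨J, hJ⟩ := exists_gap_map (ι := ι)
  -- bounds
  have hG : ∀ j, ∃ G : ℕ, ∀ r, ‖Wt w r * v j r‖ * lam j ^ r ≤ G := by
    intro j
    obtain ⟨m, hm⟩ := hv j
    obtain ⟨G, hG⟩ := exists_nat_gt (∑ r ∈ Finset.range m, ‖Wt w r * v j r‖ * lam j ^ r)
    have hnn : ∀ r, 0 ≤ ‖Wt w r * v j r‖ * lam j ^ r := fun r => by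
      have := hlam0 j; positivity
    refine ⟨G, fun r => ?_⟩
    by_cases hr : r < m
    · exact (Finset.single_le_sum (f := fun r => ‖Wt w r * v j r‖ * lam j ^ r)
        (fun r _ => hnn r) (Finset.mem_range.2 hr)).trans hG.le
    · rw [hm r (by omega)]; simp
  choose G hG using hG
  have hL : ∀ j, ∃ L : ℕ, 1 ≤ L ∧ (∀ k, L ≤ k → v j k = 0) ∧
      C * G j * (θ ^ L * (1 - θ)⁻¹) < ε j / 2 := by
    intro j
    obtain ⟨m, hm⟩ := hv j
    have ht : Tendsto (fun L : ℕ => C * G j * (θ ^ L * (1 - θ)⁻¹)) atTop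
        (𝓝 (C * G j * (0 * (1 - θ)⁻¹))) :=
      ((tendsto_pow_atTop_nhds_zero_of_lt_one hθ0.le hθ1).mul_const _).const_mul _
    have hev := ht.eventually (gt_mem_nhds (show C * G j * (0 * (1 - θ)⁻¹) < ε j / 2 by
      have := hε j; simpa using this))
    obtain ⟨L, hL1, hL2⟩ := (hev.and (eventually_ge_atTop (m + 1))).exists
    exact ⟨L, by omega, fun k hk => hm k (by omega), hL1⟩
  choose L hL1 hLv hLε using hL
  let jj : ℕ → ι := fun i => J (Nat.log Q i)
  -- the vector multiplied by the weights
  let y : ℕ → ℂ := fun i => if G (jj i) ≤ i then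
    (((lam (jj i) ^ (i - i % L (jj i)))⁻¹ : ℝ) : ℂ) *
      (Wt w (i % L (jj i)) * v (jj i) (i % L (jj i))) else 0
  have hy1 : ∀ i, ‖y i‖ ≤ G (jj i) * (lam (jj i) ^ i)⁻¹ := by
    intro i
    have hl := hlam0 (jj i)
    simp only [y]
    split_ifs with h
    · rw [norm_mul, Complex.norm_real, Real.norm_of_nonneg (by positivity)]
      have h1 := hG (jj i) (i % L (jj i))
      have h2 : lam (jj i) ^ i = lam (jj i) ^ (i - i % L (jj i)) * lam (jj i) ^ (i % L (jj i)) := by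
        rw [← pow_add]
        congr 1
        have := Nat.mod_le i (L (jj i))
        omega
      rw [h2, mul_inv]
      rw [← div_eq_inv_mul, div_le_iff₀ (by positivity)]
      rw [show (G (jj i) : ℝ) * ((lam (jj i) ^ (i - i % L (jj i)))⁻¹ *
        (lam (jj i) ^ (i % L (jj i)))⁻¹) * lam (jj i) ^ (i - i % L (jj i)) =
        G (jj i) / lam (jj i) ^ (i % L (jj i)) by field_simp]
      rw [le_div_iff₀ (by positivity)]
      exact h1
    · simp only [norm_zero]; positivity
  have hy2 : ∀ i, ‖y i‖ ≤ i * (a ^ i)⁻¹ := by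
    intro i
    by_cases h : G (jj i) ≤ i
    · refine (hy1 i).trans ?_
      have h1 : (G (jj i) : ℝ) ≤ i := by exact_mod_cast h
      have h2 := (hlam (jj i)).1
      have h3 := hlam0 (jj i)
      gcongr
    · simp only [y, if_neg h, norm_zero]; positivity
  let xf : ℕ → ℂ := fun i => y i / Wt w i
  have hsumη : Summable (fun i : ℕ => C * ((i : ℝ) * η ^ i)) := by
    have := summable_pow_mul_geometric_of_norm_lt_one (R := ℝ) 1 (r := η)
      (by rw [Real.norm_of_nonneg hη0.le]; exact hη1)
    simpa using this.mul_left C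
  have hxf : ∀ i, ‖xf i‖ ≤ C * ((i : ℝ) * η ^ i) := by
    intro i
    simp only [xf]
    rw [norm_div, div_eq_mul_inv]
    calc ‖y i‖ * ‖Wt w i‖⁻¹ ≤ (i * (a ^ i)⁻¹) * (C * ρ ^ i) := by
          gcongr
          · exact hy2 i
          · exact hW i
      _ = C * (i * θ ^ i) := by rw [hθ, div_pow]; ring
      _ ≤ _ := by
        gcongr
        nlinarith
  have hmem : Memℓp xf p := by
    refine Memℓp.of_exponent_ge (q := 1) ?_ Fact.out
    rw [memℓp_gen_iff (by simp)]
    simp only [ENNReal.toReal_one, Real.rpow_one]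
    exact Summable.of_nonneg_of_le (fun _ => norm_nonneg _) hxf hsumη
  let x : lp (fun _ : ℕ => ℂ) p := ⟨xf, hmem⟩
  refine ⟨x, fun j => ?_⟩
  obtain ⟨P, hP⟩ := hJ j
  have htail := tendsto_sum_nat_add (fun i : ℕ => C * ((i : ℝ) * η ^ i))
  have htail2 := htail.eventually (gt_mem_nhds (half_pos (hε j)))
  rw [eventually_atTop] at htail2
  obtain ⟨n1, hn1⟩ := htail2
  refine good_density J j P hP Q (L j) (n1 + G j + 2 * L j + 1) hQ4 (hL1 j) _ ?_
  intro n hn hnj hLn hnQ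
  set s := Nat.log Q n with hs
  have hl0 := hlam0 j
  have hsn : Q ^ s ≤ n := Nat.pow_log_le_self Q (by omega)
  have hQs : 4 * (N + 1) * Q ^ s = Q ^ (s + 1) := by rw [pow_succ]; ring
  have hcoord : ∀ k, ‖(((((lam j : ℝ) : ℂ) • B) ^ n) x - v j) k‖ =
      ‖(lam j : ℂ) ^ n * y (n + k) / Wt w k - v j k‖ := by
    intro k
    have h1 := shift_pow w B hB x n k
    have h2 : Wt w (n + k) * x (n + k) = y (n + k) := by
      change Wt w (n + k) * (y (n + k) / Wt w (n + k)) = _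
      rw [mul_div_cancel₀ _ (hWne _)]
    rw [h2] at h1
    rw [← h1, smul_pow]
    congr 1
    rw [lp.coeFn_sub, Pi.sub_apply, _root_.smul_apply, lp.coeFn_smul, Pi.smul_apply, smul_eq_mul]
    have := hWne k
    field_simp
  have hblock : ∀ k, n + k < Q ^ (s + 1) → jj (n + k) = j := by
    intro k hk
    simp only [jj]
    rw [Nat.log_eq_of_pow_le_of_lt_pow (by omega) hk]
    exact hnj
  -- main estimate
  have hmain : ∀ k, ‖(((((lam j : ℝ) : ℂ) • B) ^ n) x - v j) k‖ ≤
      C * G j * (if k < L j then 0 else θ ^ k) + C * (((k + n : ℕ) : ℝ) * η ^ (k + n)) := by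
    intro k
    rw [hcoord]
    have hpos2 : 0 ≤ C * (((k + n : ℕ) : ℝ) * η ^ (k + n)) := by positivity
    have hpos1 : 0 ≤ C * G j * (if k < L j then 0 else θ ^ k) := by
      split_ifs <;> positivity
    by_cases hk : k < L j
    · have hlt : n + k < Q ^ (s + 1) := by nlinarith
      have hj := hblock k hlt
      obtain ⟨q, hq⟩ := hLn
      have hmod : (n + k) % L j = k := by
        rw [hq, Nat.mul_add_mod, Nat.mod_eq_of_lt hk]
      have : y (n + k) = ((lam j : ℂ) ^ n)⁻¹ * (Wt w k * v j k) := by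
        simp only [y, hj, hmod]
        rw [if_pos (by omega), Nat.add_sub_cancel]
        push_cast
        rfl
      have hlc : (lam j : ℂ) ≠ 0 := by exact_mod_cast hl0.ne'
      have h0 : (lam j : ℂ) ^ n * y (n + k) / Wt w k - v j k = 0 := by
        rw [this]
        have := hWne k
        field_simp
        ring
      rw [h0, norm_zero]
      linarith
    · push Not at hk
      rw [hLv j k hk, sub_zero, norm_div, norm_mul, norm_pow, Complex.norm_real,
        Real.norm_of_nonneg hl0.le, div_eq_mul_inv]
      by_cases hlt : n + k < Q ^ (s + 1)
      · have hj := hblock k hlt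
        have h1 := hy1 (n + k)
        rw [hj] at h1
        rw [if_neg (by omega)]
        refine le_trans ?_ (le_add_of_nonneg_right hpos2)
        calc lam j ^ n * ‖y (n + k)‖ * ‖Wt w k‖⁻¹
            ≤ lam j ^ n * (G j * (lam j ^ (n + k))⁻¹) * (C * ρ ^ k) := by
              gcongr
              exact hW k
          _ = C * G j * (ρ / lam j) ^ k := by
              rw [pow_add, div_pow]; field_simp
          _ ≤ _ := by
              rw [hθ]
              have := (hlam j).1
              gcongr
      · push Not at hlt
        refine le_trans ?_ (le_add_of_nonneg_left hpos1)
        have hbig : 2 * N * n ≤ n + k := by nlinarith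
        have h5 : (lam j / ρ) ^ n * θ ^ (n + k) ≤ η ^ (n + k) := by
          have h6 : (lam j / ρ) ^ n * θ ^ (N * n) ≤ 1 := by
            rw [pow_mul, ← mul_pow]
            refine pow_le_one₀ (by positivity) (le_trans ?_ hN)
            have := (hlam j).2
            gcongr
          obtain ⟨d, hd⟩ := Nat.exists_eq_add_of_le hbig
          have h7 : θ ^ (n + k) = θ ^ (N * n) * η ^ (2 * N * n + d + d) := by
            rw [← hηsq, ← pow_mul, ← pow_mul, ← pow_add, hd]
            congr 1
            ring
          rw [h7, ← mul_assoc, hd]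
          refine (mul_le_of_le_one_left (by positivity) h6).trans ?_
          exact pow_le_pow_of_le_one hη0.le hη1.le (by omega)
        calc lam j ^ n * ‖y (n + k)‖ * ‖Wt w k‖⁻¹
            ≤ lam j ^ n * ((n + k : ℕ) * (a ^ (n + k))⁻¹) * (C * ρ ^ k) := by
              gcongr
              · exact hy2 (n + k)
              · exact hW k
          _ = C * ((n + k : ℕ) * ((lam j / ρ) ^ n * θ ^ (n + k))) := by
              rw [hθ, div_pow, div_pow, pow_add ρ]; field_simp
          _ ≤ C * ((n + k : ℕ) * η ^ (n + k)) := by gcongr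
          _ = _ := by rw [add_comm n k]
  have hsum1 : HasSum (fun k => if k < L j then 0 else θ ^ k) (θ ^ L j * (1 - θ)⁻¹) := by
    rw [← hasSum_nat_add_iff' (L j)]
    have h0 : ∑ i ∈ Finset.range (L j), (if i < L j then 0 else θ ^ i) = 0 := by
      refine Finset.sum_eq_zero fun i hi => ?_
      rw [if_pos (Finset.mem_range.1 hi)]
    rw [h0, sub_zero]
    have := (hasSum_geometric_of_lt_one hθ0.le hθ1).mul_left (θ ^ L j)
    have hfun : (fun k => if k + L j < L j then 0 else θ ^ (k + L j)) =
        fun i => θ ^ L j * θ ^ i := by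
      funext k
      rw [if_neg (by omega), pow_add, mul_comm]
    rw [hfun]
    exact this
  have hsum2 := ((summable_nat_add_iff n).2 hsumη).hasSum
  have hfinal := norm_le_of_coord hp _ _ _ ((hsum1.mul_left (C * G j)).add hsum2) hmain
  have h8 := hn1 n (by omega)
  have h9 := hLε j
  change ‖_‖ < ε j
  linarith

lemma part_one (hp : p ≠ ⊤) (w : ℕ → ℂ) (hw0 : ∀ n : ℕ, 1 ≤ n → w n ≠ 0)
    (B : lp (fun _ : ℕ => ℂ) p →L[ℂ] lp (fun _ : ℕ => ℂ) p)
    (hB : ∀ x : lp (fun _ : ℕ => ℂ) p, ∀ n : ℕ, (B x) n = w (n + 1) * x (n + 1))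
    (Λ : Set ℝ) (hne : Λ.Nonempty) (hcount : Λ.Countable) (hcpt : IsCompact (closure Λ))
    (hsub : closure Λ ⊆ {l : ℝ | rpwInv w < ENNReal.ofReal l}) :
    (⋂ l ∈ Λ, FHC ((l : ℂ) • B)).Nonempty := by
  obtain ⟨a, haΛ, hamin⟩ := hcpt.exists_isLeast hne.closure
  obtain ⟨b, hb⟩ := hcpt.bddAbove
  obtain ⟨C, ρ, hC, hρ, hρa, hW⟩ := weight_bound w hw0 a (hsub haΛ)
  obtain ⟨D, hDc, hDd, hDf⟩ := exists_dense_finsupp (p := p) hp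
  have : Countable Λ := hcount.to_subtype
  have : Countable D := hDc.to_subtype
  have : Nonempty Λ := hne.to_subtype
  have : Nonempty D := hDd.nonempty.to_subtype
  obtain ⟨x, hx⟩ := common_exists hp w hw0 B hB C ρ a b hC hρ hρa hW
    (ι := Λ × D × ℕ) (fun j => j.1) (fun j => ⟨hamin (subset_closure j.1.2),
      hb (subset_closure j.1.2)⟩) (fun j => j.2.1) (fun j => hDf _ j.2.1.2)
    (fun j => 1 / ((j.2.2 : ℝ) + 1)) (fun j => by positivity)
  refine ⟨x, Set.mem_iInter₂.2 fun l hl U hU hUne => ?_⟩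
  obtain ⟨v, hvD, hvU⟩ := hDd.exists_mem_open hU hUne
  obtain ⟨ε, hε, hball⟩ := Metric.isOpen_iff.1 hU v hvU
  obtain ⟨q, hq⟩ := exists_nat_one_div_lt hε
  have h1 := hx (⟨l, hl⟩, ⟨v, hvD⟩, q)
  obtain ⟨c, hc, hE⟩ := of_lowerDensity_pos _ h1
  refine lowerDensity_pos_of _ c hc ?_
  filter_upwards [hE] with n hn
  refine hn.trans ?_
  unfold cnt
  refine Finset.sum_le_sum fun k _ => ?_
  refine Set.indicator_le_indicator_of_subset ?_ (fun _ => zero_le_one) k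
  intro m hm
  refine hball ?_
  rw [Metric.mem_ball, dist_eq_norm]
  exact lt_trans hm hq

end partOne

/-- Corollary 2.24 for weighted backward shifts on `ℓ^p(ℕ)`, encoded as a bounded
operator `B` with `(B x) n = w (n+1) * x (n+1)`. -/
theorem stmt9 (p : ℝ≥0∞) [Fact (1 ≤ p)] (hp : p ≠ ⊤)
    (w : ℕ → ℂ) (hw0 : ∀ n : ℕ, 1 ≤ n → w n ≠ 0)
    (hwbdd : ∃ A : ℝ, ∀ n : ℕ, ‖w n‖ ≤ A)
    (B : lp (fun _ : ℕ => ℂ) p →L[ℂ] lp (fun _ : ℕ => ℂ) p)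
    (hB : ∀ x : lp (fun _ : ℕ => ℂ) p, ∀ n : ℕ, (B x) n = w (n + 1) * x (n + 1))
    (Λ : Set ℝ) (hΛpos : Λ ⊆ Set.Ioi (0 : ℝ)) (hne : Λ.Nonempty) :
    -- (1) nonempty intersection for countable Λ relatively compact in (r_{p,w}⁻¹, +∞)
    ((Λ.Countable ∧ IsCompact (closure Λ) ∧
        closure Λ ⊆ {l : ℝ | rpwInv w < ENNReal.ofReal l}) →
      (⋂ l ∈ Λ, FHC ((l : ℂ) • B)).Nonempty) ∧
    -- (2) empty intersection if Λ is unbounded, or has two elements and r(B_w)⁻¹ ≥ inf Λ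
    ((¬ BddAbove Λ ∨
        ((∃ a ∈ Λ, ∃ b ∈ Λ, a ≠ b) ∧
          ENNReal.ofReal (sInf Λ) ≤ (spectralRadius ℂ B)⁻¹)) →
      ⋂ l ∈ Λ, FHC ((l : ℂ) • B) = ∅) ∧
    -- In particular: if r_{p,w} = r(B_w) and Λ has at least two elements
    (((rpwInv w)⁻¹ = spectralRadius ℂ B → (∃ a ∈ Λ, ∃ b ∈ Λ, a ≠ b) →
      ((⋂ l ∈ Λ, FHC ((l : ℂ) • B)).Nonempty ↔
        (Λ.Countable ∧ IsCompact (closure Λ) ∧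
          closure Λ ⊆ {l : ℝ | rpwInv w < ENNReal.ofReal l})))) := by
  have hntX : Nontrivial (lp (fun _ : ℕ => ℂ) p) := by
    refine ⟨⟨lp.single p 0 (1 : ℂ), 0, fun h => ?_⟩⟩
    have h1 : ‖(lp.single p 0 (1 : ℂ) : lp (fun _ : ℕ => ℂ) p)‖ = 0 := by rw [h, norm_zero]
    rw [lp.norm_single (lt_of_lt_of_le one_pos Fact.out)] at h1
    simp at h1
  refine ⟨fun h => part_one hp w hw0 B hB Λ hne h.1 h.2.1 h.2.2, ?_, ?_⟩
  · intro h
    rw [Set.eq_empty_iff_forall_notMem]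
    intro x hx
    rw [Set.mem_iInter₂] at hx
    rcases h with h | ⟨h2, h⟩
    · exact h (bddAbove_of_common B Λ hΛpos hne x hx)
    · exact absurd (inf_of_common B Λ hΛpos h2 x hx) (not_lt.2 h)
  · intro hr h2
    refine ⟨?_, fun h => part_one hp w hw0 B hB Λ hne h.1 h.2.1 h.2.2⟩
    rintro ⟨x, hx⟩
    rw [Set.mem_iInter₂] at hx
    obtain ⟨b, hb⟩ := bddAbove_of_common B Λ hΛpos hne x hx
    have hinf := inf_of_common B Λ hΛpos h2 x hx
    have hbelow : BddBelow Λ := ⟨0, fun y hy => (hΛpos hy).le⟩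
    have hcl : closure Λ ⊆ Set.Icc (sInf Λ) b :=
      closure_minimal (fun y hy => ⟨csInf_le hbelow hy, hb hy⟩) isClosed_Icc
    refine ⟨countable_of_common B Λ hΛpos x hx,
      isCompact_Icc.of_isClosed_subset isClosed_closure hcl, fun y hy => ?_⟩
    rw [← hr, inv_inv] at hinf
    exact hinf.trans_le (ENNReal.ofReal_le_ofReal (hcl hy).1)
end

section
/- Let 1 ≤ p < ∞, let B_w be a bounded weighted backward shift on ℓ^p(ℕ), and let Λ be a subset of (0,+∞) with at least two elements. If λ_w^{−1} ≥ inf(Λ), where λ_w := limsup_{n→∞} |w_1 ⋯ w_n|^{1/n}, then ⋂_{λ∈Λ} FHC(λB_w) = ∅. -/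
open Filter Topology
open scoped ENNReal NNReal

/-- `λ_w = limsup_n |w₁⋯w_n|^{1/n}`, computed in `ℝ≥0∞`. -/
noncomputable def lamw (w : ℕ → ℂ) : ℝ≥0∞ :=
  Filter.limsup
    (fun n : ℕ => (∏ k ∈ Finset.Icc 1 n, (‖w k‖₊ : ℝ≥0∞)) ^ (1 / (n : ℝ)))
    Filter.atTop

lemma dens_aux (E : Set ℕ) (hE : 0 < lowerDensity E) :
    ∃ K N : ℕ, ∀ m : ℕ, N ≤ m → ∃ n ∈ E, n ≤ m ∧ m ≤ K * n := by
  obtain ⟨d, hd0, hd⟩ := exists_between hE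
  unfold lowerDensity at hd
  have hev := Filter.eventually_lt_of_lt_liminf hd
    (Filter.isBoundedUnder_of ⟨0, fun n => by
      have : 0 ≤ ∑ k ∈ Finset.range (n + 1), Set.indicator E (fun _ => (1 : ℝ)) k :=
        Finset.sum_nonneg fun k _ => Set.indicator_nonneg (fun _ _ => zero_le_one) k
      show (0 : ℝ) ≤ _
      positivity⟩)
  obtain ⟨N₀, hN₀⟩ := Filter.eventually_atTop.1 hev
  obtain ⟨K, hK⟩ := exists_nat_gt (2 / d)
  obtain ⟨N₁, hN₁⟩ := exists_nat_gt (2 / d)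
  refine ⟨K, max N₀ N₁, fun m hm => ?_⟩
  by_contra hcon
  push Not at hcon
  have h1 := hN₀ m (le_trans (le_max_left _ _) hm)
  have hKpos : (0 : ℝ) < K := lt_trans (by positivity) hK
  have hKn : 0 < K := by exact_mod_cast hKpos
  have hmN : (N₁ : ℝ) ≤ m := by exact_mod_cast (le_trans (le_max_right _ _) hm)
  rw [lt_div_iff₀ (by positivity)] at h1
  have h2 : ∑ k ∈ Finset.range (m + 1), Set.indicator E (fun _ => (1 : ℝ)) k
      ≤ ∑ k ∈ Finset.range (m / K + 1), (1 : ℝ) := by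
    have hsub : Finset.range (m / K + 1) ⊆ Finset.range (m + 1) := by
      apply Finset.range_subset_range.2
      have := Nat.div_le_self m K
      omega
    rw [← Finset.sum_subset (f := Set.indicator E (fun _ => (1 : ℝ))) hsub]
    · apply Finset.sum_le_sum
      intro i _
      exact Set.indicator_le_self' (fun _ _ => zero_le_one) i
    · intro k hk hk'
      apply Set.indicator_of_notMem
      intro hkE
      have h3 := hcon k hkE (by simpa [Nat.lt_succ_iff] using hk)
      apply hk'
      have : k ≤ m / K := (Nat.le_div_iff_mul_le hKn).2 (by rw [mul_comm]; exact h3.le)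
      simp; omega
  have h4 : ((m / K : ℕ) : ℝ) ≤ m / K := Nat.cast_div_le
  simp at h2
  have h5 : (m : ℝ) / K ≤ m * (d / 2) := by
    rw [div_eq_mul_inv]
    apply mul_le_mul_of_nonneg_left _ (by positivity)
    rw [inv_le_comm₀ hKpos (by positivity), inv_div]
    exact hK.le
  have h6 : 2 < N₁ * d := (div_lt_iff₀ hd0).1 hN₁
  nlinarith

lemma W_bound (w : ℕ → ℂ) (hwbdd : ∃ A : ℝ, ∀ n : ℕ, ‖w n‖ ≤ A) (a : ℝ) (ha : 0 ≤ a)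
    (h : ENNReal.ofReal a ≤ (lamw w)⁻¹) (θ : ℝ) (hθ : 1 < θ) :
    ∃ ρ C : ℝ, 0 < ρ ∧ 0 < C ∧ a * ρ < θ ∧ ∀ j, ∏ k ∈ Finset.Icc 1 j, ‖w k‖ ≤ C * ρ ^ j := by
  rcases ha.eq_or_lt with rfl | ha
  · obtain ⟨A, hA⟩ := hwbdd
    have hA0 : 0 ≤ A := le_trans (norm_nonneg _) (hA 0)
    refine ⟨A + 1, 1, by linarith, one_pos, by linarith, fun j => ?_⟩
    rw [one_mul]
    calc ∏ k ∈ Finset.Icc 1 j, ‖w k‖ ≤ ∏ k ∈ Finset.Icc 1 j, (A + 1) :=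
          Finset.prod_le_prod (fun _ _ => norm_nonneg _) (fun k _ => by linarith [hA k])
      _ = _ := by simp
  · set ρ := (1 + θ) / (2 * a) with hρ
    have hρ0 : 0 < ρ := by positivity
    have haρ : a * ρ = (1 + θ) / 2 := by rw [hρ]; field_simp
    have hlt : lamw w < ENNReal.ofReal ρ := by
      have h1 : lamw w ≤ (ENNReal.ofReal a)⁻¹ := ENNReal.le_inv_iff_le_inv.1 h
      refine lt_of_le_of_lt h1 ?_
      rw [← ENNReal.ofReal_inv_of_pos ha, ENNReal.ofReal_lt_ofReal_iff hρ0,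
        inv_lt_iff_one_lt_mul₀ ha]
      linarith
    obtain ⟨N, hN⟩ := Filter.eventually_atTop.1 (Filter.eventually_lt_of_limsup_lt hlt)
    have hbig : ∀ j, max N 1 ≤ j → ∏ k ∈ Finset.Icc 1 j, ‖w k‖ ≤ ρ ^ j := by
      intro j hj
      have hj1 : 1 ≤ j := le_trans (le_max_right _ _) hj
      have h2 := (hN j (le_trans (le_max_left _ _) hj)).le
      have hj0 : (0 : ℝ) < j := by exact_mod_cast hj1
      rw [one_div, ENNReal.rpow_inv_le_iff hj0, ENNReal.rpow_natCast,
        ← ENNReal.ofReal_pow hρ0.le] at h2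
      have h3 := ENNReal.toReal_mono ENNReal.ofReal_ne_top h2
      rw [ENNReal.toReal_ofReal (by positivity), ENNReal.toReal_prod] at h3
      simpa using h3
    refine ⟨ρ, 1 + ∑ i ∈ Finset.range (max N 1), (∏ k ∈ Finset.Icc 1 i, ‖w k‖) / ρ ^ i, hρ0,
      ?_, by linarith, fun j => ?_⟩
    · have : 0 ≤ ∑ i ∈ Finset.range (max N 1), (∏ k ∈ Finset.Icc 1 i, ‖w k‖) / ρ ^ i := by
        positivity
      linarith
    · rw [← div_le_iff₀ (by positivity)]
      by_cases hj : max N 1 ≤ j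
      · have h4 : (∏ k ∈ Finset.Icc 1 j, ‖w k‖) / ρ ^ j ≤ 1 :=
          (div_le_one (by positivity)).2 (hbig j hj)
        have : 0 ≤ ∑ i ∈ Finset.range (max N 1), (∏ k ∈ Finset.Icc 1 i, ‖w k‖) / ρ ^ i := by
          positivity
        linarith
      · have := Finset.single_le_sum
          (f := fun i => (∏ k ∈ Finset.Icc 1 i, ‖w k‖) / ρ ^ i)
          (s := Finset.range (max N 1)) (fun i _ => by positivity)
          (Finset.mem_range.2 (not_le.1 hj))
        linarith

lemma shift_pow_apply (p : ℝ≥0∞) [Fact (1 ≤ p)] (w : ℕ → ℂ)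
    (B : lp (fun _ : ℕ => ℂ) p →L[ℂ] lp (fun _ : ℕ => ℂ) p)
    (hB : ∀ x : lp (fun _ : ℕ => ℂ) p, ∀ n : ℕ, (B x) n = w (n + 1) * x (n + 1))
    (n : ℕ) : ∀ (x : lp (fun _ : ℕ => ℂ) p) (j : ℕ),
    ((B ^ n) x) j * ∏ k ∈ Finset.Icc 1 j, w k = (∏ k ∈ Finset.Icc 1 (n + j), w k) * x (n + j) := by
  induction n with
  | zero => intro x j; simp [mul_comm]
  | succ n ih =>
    intro x j
    have : (B ^ (n + 1)) x = (B ^ n) (B x) := by rw [pow_succ]; rfl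
    rw [this, ih, hB, show n + 1 + j = (n + j) + 1 by ring,
      Finset.prod_Icc_succ_top (by omega)]
    ring

lemma pow_norm (p : ℝ≥0∞) [Fact (1 ≤ p)] (w : ℕ → ℂ)
    (B : lp (fun _ : ℕ => ℂ) p →L[ℂ] lp (fun _ : ℕ => ℂ) p)
    (hB : ∀ x : lp (fun _ : ℕ => ℂ) p, ∀ n : ℕ, (B x) n = w (n + 1) * x (n + 1))
    (l : ℝ) (hl : 0 < l) (n : ℕ) (x : lp (fun _ : ℕ => ℂ) p) (j : ℕ) :
    ‖((((l : ℂ) • B) ^ n) x) j‖ * ∏ k ∈ Finset.Icc 1 j, ‖w k‖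
      = l ^ n * ((∏ k ∈ Finset.Icc 1 (n + j), ‖w k‖) * ‖x (n + j)‖) := by
  have h1 : (((l : ℂ) • B) ^ n) x = (l : ℂ) ^ n • ((B ^ n) x) := by
    rw [smul_pow]; rfl
  have h2 := congrArg norm (shift_pow_apply p w B hB n x j)
  rw [norm_mul, norm_mul, norm_prod, norm_prod] at h2
  rw [h1, ← h2, lp.coeFn_smul, Pi.smul_apply, norm_smul, norm_pow, Complex.norm_real,
    Real.norm_of_nonneg hl.le, mul_assoc]

/-- Proposition 2.25: if `λ_w⁻¹ ≥ inf Λ` then the multiples `λB_w`, `λ ∈ Λ`,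
share no frequently hypercyclic vector. The weighted backward shift is encoded
as a bounded operator `B` with `(B x) n = w (n+1) * x (n+1)`. -/
theorem stmt11 (p : ℝ≥0∞) [Fact (1 ≤ p)] (hp : p ≠ ⊤)
    (w : ℕ → ℂ) (hw0 : ∀ n : ℕ, 1 ≤ n → w n ≠ 0)
    (hwbdd : ∃ A : ℝ, ∀ n : ℕ, ‖w n‖ ≤ A)
    (B : lp (fun _ : ℕ => ℂ) p →L[ℂ] lp (fun _ : ℕ => ℂ) p)
    (hB : ∀ x : lp (fun _ : ℕ => ℂ) p, ∀ n : ℕ, (B x) n = w (n + 1) * x (n + 1))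
    (Λ : Set ℝ) (hΛpos : Λ ⊆ Set.Ioi (0 : ℝ))
    (hΛ2 : ∃ a ∈ Λ, ∃ b ∈ Λ, a ≠ b)
    (h : ENNReal.ofReal (sInf Λ) ≤ (lamw w)⁻¹) :
    ⋂ l ∈ Λ, FHC ((l : ℂ) • B) = ∅ := by
  classical
  obtain ⟨μ, hμ, hμa⟩ : ∃ μ ∈ Λ, sInf Λ < μ := by
    have hbd : BddBelow Λ := ⟨0, fun x hx => (hΛpos hx).le⟩
    obtain ⟨a, ha, b, hb, hab⟩ := hΛ2
    rcases lt_or_gt_of_ne hab with h' | h'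
    · exact ⟨b, hb, lt_of_le_of_lt (csInf_le hbd ha) h'⟩
    · exact ⟨a, ha, lt_of_le_of_lt (csInf_le hbd hb) h'⟩
  have ha0 : 0 ≤ sInf Λ := Real.sInf_nonneg fun x hx => (hΛpos hx).le
  have hne : Λ.Nonempty := ⟨μ, hμ⟩
  have hμ0 : 0 < μ := hΛpos hμ
  rw [Set.eq_empty_iff_forall_notMem]
  intro x hx
  simp only [Set.mem_iInter] at hx
  have hp0 : p ≠ 0 := (lt_of_lt_of_le one_pos (Fact.out : 1 ≤ p)).ne'
  set e : lp (fun _ : ℕ => ℂ) p := lp.single p 0 (1 : ℂ) with he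
  have hen : ‖e‖ = 1 := by
    rw [he, lp.norm_single (lt_of_lt_of_le one_pos (Fact.out : 1 ≤ p))]; simp
  have he0 : e 0 = 1 := by rw [he]; simp
  have hden : ∀ l ∈ Λ, 0 < lowerDensity {n : ℕ | (((l : ℂ) • B) ^ n) x ∈ Metric.ball e (1 / 2)} :=
    fun l hl => hx l hl _ Metric.isOpen_ball ⟨e, Metric.mem_ball_self (by norm_num)⟩
  obtain ⟨K, N, hKN⟩ := dens_aux _ (hden μ hμ)
  -- choose the intermediate parameter
  set ν := (sInf Λ + μ) / 2 with hν
  have hν0 : 0 < ν := by rw [hν]; linarith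
  have hνμ : ν < μ := by rw [hν]; linarith
  have haν : sInf Λ < ν := by rw [hν]; linarith
  obtain ⟨θ, hθ1, hθK⟩ : ∃ θ : ℝ, 1 < θ ∧ θ ^ K < μ / ν := by
    have hc : Tendsto (fun t : ℝ => t ^ K) (𝓝[>] 1) (𝓝 1) := by
      have : Tendsto (fun t : ℝ => t ^ K) (𝓝 1) (𝓝 (1 ^ K)) := (continuous_pow K).tendsto 1
      rw [one_pow] at this
      exact this.mono_left nhdsWithin_le_nhds
    have h1 := hc.eventually_lt_const ((one_lt_div hν0).2 hνμ)
    obtain ⟨t, ht, ht'⟩ := (h1.and self_mem_nhdsWithin).exists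
    exact ⟨t, ht', ht⟩
  obtain ⟨ρ, C, hρ, hC, haρ, hW⟩ := W_bound w hwbdd _ ha0 h θ hθ1
  obtain ⟨l, hl, hll⟩ := exists_lt_of_csInf_lt hne
    (lt_min haν ((lt_div_iff₀ hρ).2 haρ))
  have hl0 : 0 < l := hΛpos hl
  have hlν : l < ν := lt_of_lt_of_le hll (min_le_left _ _)
  have hlρ : l * ρ < θ := (lt_div_iff₀ hρ).1 (lt_of_lt_of_le hll (min_le_right _ _))
  obtain ⟨K', N', hKN'⟩ := dens_aux _ (hden l hl)
  set q := μ / l / θ ^ K with hq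
  have hθ0 : 0 < θ := by linarith
  have hq1 : 1 < q := by
    rw [hq, one_lt_div (by positivity)]
    refine hθK.trans ?_
    gcongr
  obtain ⟨M, hM⟩ := pow_unbounded_of_one_lt (3 * C) hq1
  -- a large element `m` of the return set for `l`
  obtain ⟨m, hm, hmle, hmge⟩ : ∃ m ∈ {n : ℕ | (((l : ℂ) • B) ^ n) x ∈ Metric.ball e (1 / 2)},
      N ≤ m ∧ K * M < m := by
    obtain ⟨m, hm, h1, h2⟩ := hKN' (max N' (K' * (N + K * M + 1))) (le_max_left _ _)
    have h3 := (le_max_right _ _).trans h2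
    have hpos : 0 < K' := by
      by_contra h0
      have h0 : K' = 0 := by omega
      subst h0
      obtain ⟨n, _, _, h5⟩ := hKN' (N' + 1) (by omega)
      omega
    have h4 := Nat.le_of_mul_le_mul_left h3 hpos
    exact ⟨m, hm, by omega, by omega⟩
  obtain ⟨n, hn, hnm, hmn⟩ := hKN m hmle
  have hMn : M ≤ n := by
    by_contra h0
    have : K * n ≤ K * M := Nat.mul_le_mul_left K (by omega)
    omega
  obtain ⟨j, rfl⟩ := Nat.exists_eq_add_of_le hnm
  simp only [Set.mem_ofPred_eq, Metric.mem_ball, dist_eq_norm] at hm hn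
  -- lower estimate from `l`
  have e1 := pow_norm p w B hB l hl0 (n + j) x 0
  have e2 := pow_norm p w B hB μ hμ0 n x j
  simp only [add_zero, Finset.Icc_eq_empty_of_lt zero_lt_one, Finset.prod_empty, mul_one] at e1
  have b1 : 1 / 2 ≤ ‖((((l : ℂ) • B) ^ (n + j)) x) 0‖ := by
    have h1 := (lp.norm_apply_le_norm hp0 ((((l : ℂ) • B) ^ (n + j)) x - e) 0).trans hm.le
    rw [lp.coeFn_sub, Pi.sub_apply, he0] at h1
    have h2 := norm_sub_norm_le (1 : ℂ) (((((l : ℂ) • B) ^ (n + j)) x) 0)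
    rw [norm_sub_rev, norm_one] at h2
    linarith
  have b2 : ‖((((μ : ℂ) • B) ^ n) x) j‖ ≤ 3 / 2 := by
    refine (lp.norm_apply_le_norm hp0 _ j).trans ?_
    have h2 := norm_sub_norm_le ((((μ : ℂ) • B) ^ n) x) e
    linarith
  set Q := (∏ k ∈ Finset.Icc 1 (n + j), ‖w k‖) * ‖x (n + j)‖ with hQ
  have hWj : 0 ≤ ∏ k ∈ Finset.Icc 1 j, ‖w k‖ := by positivity
  have hQ0 : 0 ≤ Q := by positivity
  rw [e1] at b1
  have b3 : μ ^ n * Q ≤ 3 / 2 * (C * ρ ^ j) := by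
    rw [← e2]
    exact mul_le_mul b2 (hW j) hWj (by norm_num)
  have b4 : μ ^ n ≤ 3 * C * (l ^ n * θ ^ (K * n)) := by
    have s1 : (l * ρ) ^ j ≤ θ ^ (K * n) :=
      (pow_le_pow_left₀ (by positivity) hlρ.le j).trans
        (pow_le_pow_right₀ hθ1.le (by omega))
    have s2 : μ ^ n * (1 / 2) ≤ μ ^ n * (l ^ (n + j) * Q) :=
      mul_le_mul_of_nonneg_left b1 (by positivity)
    have s3 : l ^ (n + j) * (μ ^ n * Q) ≤ l ^ (n + j) * (3 / 2 * (C * ρ ^ j)) :=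
      mul_le_mul_of_nonneg_left b3 (by positivity)
    have s4 : l ^ (n + j) * (3 / 2 * (C * ρ ^ j)) = 3 / 2 * C * (l ^ n * (l * ρ) ^ j) := by
      rw [pow_add, mul_pow]; ring
    have s5 : 3 / 2 * C * (l ^ n * (l * ρ) ^ j) ≤ 3 / 2 * C * (l ^ n * θ ^ (K * n)) := by
      gcongr
    linarith
  have b5 : q ^ n ≤ 3 * C := by
    rw [hq, div_div, div_pow, mul_pow, ← pow_mul, div_le_iff₀ (by positivity)]
    exact b4
  have b6 : q ^ M ≤ q ^ n := pow_le_pow_right₀ hq1.le hMn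
  linarith
end
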